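/- Let φ_j, φ_k : ℝⁿ → ℝ be smooth ℤⁿ-periodic eigenfunctions with the same eigenvalue: Δφ_j = −λ²φ_j and Δφ_k = −λ²φ_k for some λ > 0. Then ∫_{N_{φ_j}} φ_k(x) ‖∇φ_j(x)‖ dμH^{n−1}(x) = 0. -/

import Mathlib

/-!
Write `φ = φj` and `ψ = φk`. The integral over the nodal set becomes a volume integral through the
flux formula `∫_{φ = 0} w ‖∇φ‖ = -∫_{φ > 0} div (w ∇φ)`, valid for every `C²` function `φ` and every
compactly supported `C¹` weight `w`.

*Regular points.* Near a zero with `∇φ ≠ 0` the nodal set is a graph of slope at most `κ` over the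
hyperplane `eᗮ`, where `e = ∇φ / ‖∇φ‖`. The orthogonal projection is bi-Lipschitz on it, so its
Hausdorff measure is comparable with Lebesgue measure on `eᗮ`, and Fubini along `e` turns the
resulting integral into the flux of a multiple of `e`. That multiple is chosen to differ from `w ∇φ`
by a field tangent to the level sets, which has no flux. A partition of unity and `κ → 0` give the
formula for weights supported where `∇φ ≠ 0`.

*Critical points.* Multiply `w` by cutoffs of `{‖∇φ‖² > 1/k}` and let `k → ∞`. The surface side
converges monotonically. The volume side converges because `d(‖∇φ‖²)(w ∇φ) = O(‖∇φ‖²)` offsets the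
growth of the derivatives of the cutoffs, and because the second derivatives of `φ` vanish almost
everywhere on the critical set.

*Orthogonality.* Take `w = χ ψ`, where the lattice translates of `χ` sum to `1`. The field `χ φ ∇ψ`
vanishes on the nodal set, so it has no flux and may be subtracted from `χ ψ ∇φ`. As the eigenvalues
agree, `X = ψ ∇φ - φ ∇ψ` is divergence free, and `∫_{φ > 0} dχ(X)` remains. By periodicity it
unfolds to an integral over `Q` in which `dχ` is replaced by `d(∑ₖ χ(· + k)) = 0`. Unfolding the
surface integral in the same way gives the theorem.
-/

open MeasureTheory Real Set

noncomputable section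

/-- The Euclidean Laplacian `Δφ = Σᵢ ∂²φ/∂xᵢ²`. -/
def lap {n : ℕ} (φ : EuclideanSpace ℝ (Fin n) → ℝ) (x : EuclideanSpace ℝ (Fin n)) : ℝ :=
  ∑ i : Fin n,
    fderiv ℝ (fun y => fderiv ℝ φ y (EuclideanSpace.single i 1)) x (EuclideanSpace.single i 1)

/-- `ℤⁿ`-periodicity of a function on `ℝⁿ`. -/
def ZPeriodic {n : ℕ} (φ : EuclideanSpace ℝ (Fin n) → ℝ) : Prop :=
  ∀ (x : EuclideanSpace ℝ (Fin n)) (k : Fin n → ℤ),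
    φ (x + (WithLp.equiv 2 (Fin n → ℝ)).symm fun i => (k i : ℝ)) = φ x

/-- The fundamental domain `Q = [0,1)ⁿ`. -/
def Qcube (n : ℕ) : Set (EuclideanSpace ℝ (Fin n)) :=
  {x | ∀ i, x i ∈ Set.Ico (0 : ℝ) 1}

open Filter Topology Module
open scoped ContDiff ENNReal NNReal Gradient RealInnerProductSpace

section Divergence

variable {E : Type*} [NormedAddCommGroup E] [NormedSpace ℝ E]

/-- The divergence of a vector field, in the coordinate-free form `div X = tr (DX)`. -/
def divergence (X : E → E) (x : E) : ℝ :=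
  LinearMap.trace ℝ E (fderiv ℝ X x)

variable {X Y : E → E} {f : E → ℝ} {x : E}

lemma divergence_add (hX : DifferentiableAt ℝ X x) (hY : DifferentiableAt ℝ Y x) :
    divergence (X + Y) x = divergence X x + divergence Y x := by
  simp [divergence, fderiv_add hX hY]

lemma divergence_sub (hX : DifferentiableAt ℝ X x) (hY : DifferentiableAt ℝ Y x) :
    divergence (X - Y) x = divergence X x - divergence Y x := by
  simp [divergence, fderiv_sub hX hY]

lemma divergence_smul [FiniteDimensional ℝ E] (hf : DifferentiableAt ℝ f x)
    (hX : DifferentiableAt ℝ X x) :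
    divergence (f • X) x = f x * divergence X x + fderiv ℝ f x (X x) := by
  simp [divergence, fderiv_smul hf hX]

lemma divergence_smul_const [FiniteDimensional ℝ E] (hf : DifferentiableAt ℝ f x) (e : E) :
    divergence (f • fun _ => e) x = fderiv ℝ f x e := by
  simpa [divergence] using divergence_smul hf (differentiableAt_const (x := x) e)

lemma divergence_eq_sum {ι : Type*} [Fintype ι] (b : Basis ι ℝ E) [FiniteDimensional ℝ E]
    (hX : DifferentiableAt ℝ X x) :
    divergence X x = ∑ i, fderiv ℝ (fun y => b.coord i (X y)) x (b i) := by
  classical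
  rw [divergence, LinearMap.trace_eq_matrix_trace ℝ b, Matrix.trace]
  refine Finset.sum_congr rfl fun i _ => ?_
  have hcoord := ((b.coord i).toContinuousLinearMap.hasFDerivAt.comp x hX.hasFDerivAt).fderiv
  rw [Matrix.diag_apply, LinearMap.toMatrix_apply]
  exact (DFunLike.congr_fun hcoord (b i)).symm

lemma continuous_divergence [FiniteDimensional ℝ E] (hX : ContDiff ℝ 1 X) :
    Continuous (divergence X) :=
  (LinearMap.continuous_of_finiteDimensional
    (LinearMap.trace ℝ E ∘ₗ ContinuousLinearMap.coeLM ℝ)).comp (hX.continuous_fderiv one_ne_zero)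

lemma hasCompactSupport_divergence (hX : HasCompactSupport X) :
    HasCompactSupport (divergence X) :=
  (hX.fderiv ℝ).comp_left (g := fun A : E →L[ℝ] E => LinearMap.trace ℝ E A) (by simp)

variable [FiniteDimensional ℝ E] [MeasurableSpace E] [BorelSpace E] {μ : Measure E}

lemma integrable_divergence [IsFiniteMeasureOnCompacts μ] (hX : ContDiff ℝ 1 X)
    (hXc : HasCompactSupport X) : Integrable (divergence X) μ :=
  (continuous_divergence hX).integrable_of_hasCompactSupport (hasCompactSupport_divergence hXc)

theorem integral_mul_divergence [μ.IsAddHaarMeasure] (hf : ContDiff ℝ 1 f) (hX : ContDiff ℝ 1 X)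
    (hXc : HasCompactSupport X) :
    ∫ x, f x * divergence X x ∂μ = -∫ x, fderiv ℝ f x (X x) ∂μ := by
  let b := Module.finBasis ℝ E
  let c := fun i y => b.coord i (X y)
  have hc : ∀ i, ContDiff ℝ 1 (c i) := fun i => (b.coord i).toContinuousLinearMap.contDiff.comp hX
  have hcc : ∀ i, HasCompactSupport (c i) := fun i => hXc.comp_left (map_zero _)
  have hdf : ∀ i, Continuous fun x => fderiv ℝ f x (b i) := fun i =>
    (hf.continuous_fderiv one_ne_zero).clm_apply continuous_const
  have hdc : ∀ i, Continuous fun x => fderiv ℝ (c i) x (b i) := fun i =>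
    ((hc i).continuous_fderiv one_ne_zero).clm_apply continuous_const
  have hleft : ∀ i, Integrable (fun x => f x * fderiv ℝ (c i) x (b i)) μ := fun i =>
    (hf.continuous.mul (hdc i)).integrable_of_hasCompactSupport ((hcc i).fderiv_apply ℝ _).mul_left
  have hright : ∀ i, Integrable (fun x => fderiv ℝ f x (b i) * c i x) μ := fun i =>
    ((hdf i).mul (hc i).continuous).integrable_of_hasCompactSupport (hcc i).mul_left
  have hfX : ∀ x, fderiv ℝ f x (X x) = ∑ i, fderiv ℝ f x (b i) * c i x := fun x => by
    refine (congrArg (fderiv ℝ f x) (b.sum_repr (X x)).symm).trans ?_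
    simp only [map_sum, map_smul, smul_eq_mul, c, Basis.coord_apply, mul_comm]
  simp_rw [divergence_eq_sum b (hX.differentiable one_ne_zero _), hfX, Finset.mul_sum]
  rw [integral_finsetSum _ fun i _ => hleft i, integral_finsetSum _ fun i _ => hright i,
    ← Finset.sum_neg_distrib]
  exact Finset.sum_congr rfl fun i _ => integral_mul_fderiv_eq_neg_fderiv_mul_of_integrable
    (hright i) (hleft i)
    ((hf.continuous.mul (hc i).continuous).integrable_of_hasCompactSupport (hcc i).mul_left)
    (fun x _ => hf.differentiable one_ne_zero x) (fun x _ => (hc i).differentiable one_ne_zero x)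

end Divergence

section PositiveCutoff

/-- The `k`-th smooth cutoff `s (k t - 1)` of the half-line `{t | 0 < t}`, with `s` the smooth
transition: it vanishes near `t ≤ 0` and increases to the indicator of the half-line. -/
def positiveCutoff (k : ℕ) (t : ℝ) : ℝ :=
  smoothTransition (k * t - 1)

variable {k : ℕ} {t : ℝ}

lemma positiveCutoff_nonneg (k : ℕ) (t : ℝ) : 0 ≤ positiveCutoff k t :=
  smoothTransition.nonneg _

lemma positiveCutoff_le_one (k : ℕ) (t : ℝ) : positiveCutoff k t ≤ 1 :=
  smoothTransition.le_one _

lemma positiveCutoff_of_mul_le (h : k * t ≤ 1) : positiveCutoff k t = 0 :=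
  smoothTransition.zero_of_nonpos (by linarith)

lemma positiveCutoff_of_le_mul (h : 2 ≤ k * t) : positiveCutoff k t = 1 :=
  smoothTransition.one_of_one_le (by linarith)

lemma positiveCutoff_mono (ht : 0 ≤ t) : Monotone fun k => positiveCutoff k t := by
  intro k l hkl
  have : (k : ℝ) * t ≤ l * t := by gcongr
  exact smoothTransition.monotone (by linarith)

lemma contDiff_positiveCutoff (k : ℕ) : ContDiff ℝ 1 (positiveCutoff k) :=
  smoothTransition.contDiff.comp ((contDiff_const.mul contDiff_id).sub contDiff_const)

lemma eventually_le_natCast_mul (ht : 0 < t) (c : ℝ) : ∀ᶠ k : ℕ in atTop, c ≤ k * t :=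
  (tendsto_natCast_atTop_atTop.atTop_mul_const ht).eventually_ge_atTop c

lemma tendsto_positiveCutoff (t : ℝ) :
    Tendsto (fun k => positiveCutoff k t) atTop (𝓝 ((Ioi 0).indicator 1 t)) := by
  refine tendsto_const_nhds.congr' ?_
  by_cases ht : 0 < t
  · filter_upwards [eventually_le_natCast_mul ht 2] with k hk
    simp [ht, positiveCutoff_of_le_mul hk]
  · filter_upwards with k
    have : (k : ℝ) * t ≤ 0 := mul_nonpos_of_nonneg_of_nonpos k.cast_nonneg (not_lt.1 ht)
    simp [ht, positiveCutoff_of_mul_le (this.trans zero_le_one)]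

lemma mul_deriv_positiveCutoff (k : ℕ) (t : ℝ) :
    t * deriv (positiveCutoff k) t = k * t * deriv smoothTransition (k * t - 1) := by
  have haffine : HasDerivAt (fun t : ℝ => k * t - 1) k t := by
    simpa using ((hasDerivAt_id t).const_mul (k : ℝ)).sub_const 1
  have hs : DifferentiableAt ℝ smoothTransition (k * t - 1) :=
    (smoothTransition.contDiff (n := 1)).differentiable one_ne_zero _
  have : deriv (positiveCutoff k) t = _ := (hs.hasDerivAt.comp t haffine).deriv
  rw [this]
  ring

lemma deriv_smoothTransition_of_notMem (ht : t ∉ Ioo (0 : ℝ) 1) :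
    deriv smoothTransition t = 0 := by
  by_cases ht0 : t ≤ 0
  · refine IsLocalMin.deriv_eq_zero (.of_forall fun y => ?_)
    rw [smoothTransition.zero_of_nonpos ht0]
    exact smoothTransition.nonneg y
  · refine IsLocalMax.deriv_eq_zero (.of_forall fun y => ?_)
    rw [smoothTransition.one_of_one_le (not_lt.1 fun h => ht ⟨not_le.1 ht0, h⟩)]
    exact smoothTransition.le_one y

lemma exists_abs_mul_deriv_positiveCutoff_le :
    ∃ C, ∀ k t, |t * deriv (positiveCutoff k) t| ≤ C := by
  have hcont : Continuous fun u : ℝ => u * deriv smoothTransition (u - 1) :=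
    continuous_id.mul ((smoothTransition.contDiff (n := 1)).continuous_deriv_one.comp
      (continuous_id.sub continuous_const))
  have hsupp : HasCompactSupport fun u : ℝ => u * deriv smoothTransition (u - 1) := by
    refine .intro (isCompact_Icc (a := 1) (b := 2)) fun u hu => ?_
    rw [deriv_smoothTransition_of_notMem, mul_zero]
    exact fun h => hu ⟨by linarith [h.1], by linarith [h.2]⟩
  obtain ⟨C, hC⟩ := hsupp.exists_bound_of_continuous hcont
  exact ⟨C, fun k t => mul_deriv_positiveCutoff k t ▸ hC (k * t)⟩

lemma tendsto_mul_deriv_positiveCutoff (t : ℝ) :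
    Tendsto (fun k => t * deriv (positiveCutoff k) t) atTop (𝓝 0) := by
  refine tendsto_const_nhds.congr' ?_
  rcases le_or_gt t 0 with ht | ht
  · filter_upwards with k
    have : (k : ℝ) * t ≤ 0 := mul_nonpos_of_nonneg_of_nonpos k.cast_nonneg ht
    rw [mul_deriv_positiveCutoff, deriv_smoothTransition_of_notMem (fun h => by linarith [h.1]),
      mul_zero]
  · filter_upwards [eventually_le_natCast_mul ht 2] with k hk
    rw [mul_deriv_positiveCutoff, deriv_smoothTransition_of_notMem (fun h => by linarith [h.2]),
      mul_zero]

lemma tendsto_integral_positiveCutoff_mul {α : Type*} [MeasurableSpace α]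
    {μ : Measure α} {f g : α → ℝ} (hf : Measurable f) (hg : Integrable g μ) :
    Tendsto (fun k => ∫ x, positiveCutoff k (f x) * g x ∂μ) atTop
      (𝓝 (∫ x in {x | 0 < f x}, g x ∂μ)) := by
  rw [← integral_indicator (measurableSet_lt measurable_const hf)]
  refine tendsto_integral_of_dominated_convergence (fun x => ‖g x‖) (fun k => ?_) hg.norm
    (fun k => .of_forall fun x => ?_) (.of_forall fun x => ?_)
  · exact ((contDiff_positiveCutoff k).continuous.measurable.comp hf).aestronglyMeasurable.mul
      hg.aestronglyMeasurable
  · rw [norm_mul, norm_of_nonneg (positiveCutoff_nonneg _ _)]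
    exact mul_le_of_le_one_left (norm_nonneg _) (positiveCutoff_le_one _ _)
  · simpa [indicator_apply] using (tendsto_positiveCutoff (f x)).mul_const (g x)

end PositiveCutoff

section Flux

variable {E : Type*} [NormedAddCommGroup E] [InnerProductSpace ℝ E] [MeasurableSpace E]
  [FiniteDimensional ℝ E] [BorelSpace E]

/-- The flux of the vector field `X` through the boundary of `{φ > 0}`, in the direction in which
`φ` increases, as given by the divergence theorem. -/
def flux (φ : E → ℝ) (X : E → E) : ℝ :=
  -∫ x in {x | 0 < φ x}, divergence X x

variable {φ g : E → ℝ} {X Y : E → E}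

lemma flux_zero : flux φ (0 : E → E) = 0 := by
  simp [flux, divergence]

lemma flux_add (hX : ContDiff ℝ 1 X) (hXc : HasCompactSupport X)
    (hY : ContDiff ℝ 1 Y) (hYc : HasCompactSupport Y) :
    flux φ (X + Y) = flux φ X + flux φ Y := by
  rw [flux, integral_congr_ae (.of_forall fun x => divergence_add
    (hX.differentiable one_ne_zero x) (hY.differentiable one_ne_zero x)),
    integral_add (integrable_divergence hX hXc).integrableOn
      (integrable_divergence hY hYc).integrableOn, neg_add, flux, flux]

lemma flux_sub (hX : ContDiff ℝ 1 X) (hXc : HasCompactSupport X)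
    (hY : ContDiff ℝ 1 Y) (hYc : HasCompactSupport Y) :
    flux φ (X - Y) = flux φ X - flux φ Y := by
  rw [eq_sub_iff_add_eq, ← flux_add (X := X - Y) (hX.sub hY) (hXc.sub hYc) hY hYc, sub_add_cancel]

lemma flux_eq_zero_of_fderiv_apply_eq_mul (hφ : ContDiff ℝ 1 φ) (hX : ContDiff ℝ 1 X)
    (hXc : HasCompactSupport X) (hg : Integrable g) (h : ∀ x, fderiv ℝ φ x (X x) = φ x * g x) :
    flux φ X = 0 := by
  have hdiv := tendsto_integral_positiveCutoff_mul hφ.continuous.measurable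
    (integrable_divergence (μ := volume) hX hXc)
  have hparts : ∀ k, ∫ x, positiveCutoff k (φ x) * divergence X x
      = -∫ x, φ x * deriv (positiveCutoff k) (φ x) * g x := fun k => by
    have hchain : ∀ x, fderiv ℝ (positiveCutoff k ∘ φ) x
        = deriv (positiveCutoff k) (φ x) • fderiv ℝ φ x := fun x =>
      (((contDiff_positiveCutoff k).differentiable one_ne_zero _).hasDerivAt.comp_hasFDerivAt x
        (hφ.differentiable one_ne_zero x).hasFDerivAt).fderiv
    have := integral_mul_divergence (μ := volume) ((contDiff_positiveCutoff k).comp hφ) hX hXc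
    simp only [Function.comp_apply, hchain, smul_apply, h, smul_eq_mul] at this
    rw [this]
    congr 2 with x
    ring
  have hzero : Tendsto (fun k => ∫ x, φ x * deriv (positiveCutoff k) (φ x) * g x) atTop (𝓝 0) := by
    obtain ⟨C, hC⟩ := exists_abs_mul_deriv_positiveCutoff_le
    rw [← integral_zero E ℝ (μ := volume)]
    refine tendsto_integral_of_dominated_convergence (fun x => C * ‖g x‖) (fun k => ?_)
      (hg.norm.const_mul C) (fun k => .of_forall fun x => ?_) (.of_forall fun x => ?_)
    · exact (hφ.continuous.mul ((contDiff_positiveCutoff k).continuous_deriv_one.comp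
        hφ.continuous)).aestronglyMeasurable.mul hg.aestronglyMeasurable
    · rw [norm_mul]
      gcongr
      exact hC k (φ x)
    · simpa using (tendsto_mul_deriv_positiveCutoff (φ x)).mul_const (g x)
  simp_rw [hparts] at hdiv
  simpa [flux] using (tendsto_nhds_unique hzero.neg hdiv).symm

end Flux

section LineFlux

lemma setIntegral_deriv_pos_of_zero {u h : ℝ → ℝ} {S : Set ℝ} {t₀ : ℝ} (hu : Continuous u)
    (hmono : StrictMonoOn u S) (hh : ContDiff ℝ 1 h) (hhc : HasCompactSupport h)
    (hS : ∀ t ∉ S, deriv h t = 0) (ht₀ : t₀ ∈ S) (hut₀ : u t₀ = 0) :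
    ∫ t in {t | 0 < u t}, deriv h t = -h t₀ := by
  have hindicator : {t | 0 < u t}.indicator (deriv h) = (Ioi t₀).indicator (deriv h) := by
    ext t
    by_cases ht : t ∈ S
    · simp [indicator_apply, ← hut₀, hmono.lt_iff_lt ht₀ ht]
    · simp [indicator_apply, hS t ht]
  rw [← integral_indicator (measurableSet_lt measurable_const hu.measurable), hindicator,
    integral_indicator measurableSet_Ioi, hhc.integral_Ioi_deriv_eq hh]

lemma setIntegral_deriv_pos_of_ne_zero {u h : ℝ → ℝ} {S : Set ℝ} (hu : Continuous u)
    (hSconn : IsPreconnected S) (hh : ContDiff ℝ 1 h) (hhc : HasCompactSupport h)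
    (hS : ∀ t ∉ S, deriv h t = 0) (hne : ∀ t ∈ S, u t ≠ 0) :
    ∫ t in {t | 0 < u t}, deriv h t = 0 := by
  have hsign : (∀ t ∈ S, 0 < u t) ∨ ∀ t ∈ S, ¬ 0 < u t := by
    by_contra! ⟨⟨t₁, ht₁, hut₁⟩, t₂, ht₂, hut₂⟩
    obtain ⟨t, ht, hut⟩ := hSconn.intermediate_value ht₁ ht₂ hu.continuousOn ⟨hut₁, hut₂.le⟩
    exact hne t ht hut
  rw [← integral_indicator (measurableSet_lt measurable_const hu.measurable)]
  rcases hsign with hpos | hneg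
  · have hindicator : {t | 0 < u t}.indicator (deriv h) = deriv h :=
      indicator_eq_self.2 fun t ht => hpos t (not_imp_comm.1 (hS t) ht)
    rw [hindicator]
    exact integral_eq_zero_of_hasDerivAt_of_integrable
      (fun t => (hh.differentiable one_ne_zero t).hasDerivAt)
      (hh.continuous_deriv_one.integrable_of_hasCompactSupport hhc.deriv)
      (hh.continuous.integrable_of_hasCompactSupport hhc)
  · refine integral_eq_zero_of_ae (.of_forall fun t => ?_)
    by_cases ht : t ∈ S
    · simp [hneg t ht]
    · simp [indicator_apply, hS t ht]

variable {E : Type*} [NormedAddCommGroup E] [NormedSpace ℝ E] {φ f : E → ℝ} {B : Set E} {e : E}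

/-- The one-dimensional flux of `f • e` through the boundary of `{φ > 0}` along the line through
`z` in the direction `e`. -/
def lineFlux (φ f : E → ℝ) (e z : E) : ℝ :=
  -∫ t in {t : ℝ | 0 < φ (z + t • e)}, fderiv ℝ f (z + t • e) e

lemma hasDerivAt_comp_line (hf : Differentiable ℝ f) (e z : E) (t : ℝ) :
    HasDerivAt (fun t : ℝ => f (z + t • e)) (fderiv ℝ f (z + t • e) e) t := by
  have hline : HasDerivAt (fun t : ℝ => z + t • e) e t := by
    simpa using ((hasDerivAt_id t).smul_const e).const_add z
  exact (hf _).hasFDerivAt.comp_hasDerivAt t hline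

lemma lineFlux_eq_deriv (hf : Differentiable ℝ f) (z : E) :
    lineFlux φ f e z = -∫ t in {t : ℝ | 0 < φ (z + t • e)}, deriv (fun t => f (z + t • e)) t := by
  simp_rw [lineFlux, (hasDerivAt_comp_line hf e z _).deriv]

lemma contDiff_comp_line (hf : ContDiff ℝ 1 f) (e z : E) :
    ContDiff ℝ 1 fun t : ℝ => f (z + t • e) :=
  hf.comp (contDiff_const.add (contDiff_id.smul contDiff_const))

lemma hasCompactSupport_comp_line (hf : HasCompactSupport f) (he : e ≠ 0) (z : E) :
    HasCompactSupport fun t : ℝ => f (z + t • e) :=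
  hf.comp_isClosedEmbedding
    ((Homeomorph.addLeft z).isClosedEmbedding.comp (isClosedEmbedding_smul_left he))

lemma deriv_comp_line_eq_zero (hf : ContDiff ℝ 1 f) (hfB : tsupport f ⊆ B) {z : E} {t : ℝ}
    (ht : z + t • e ∉ B) : deriv (fun t : ℝ => f (z + t • e)) t = 0 := by
  have hnot : z + t • e ∉ tsupport (fderiv ℝ f) := fun h => ht (hfB (tsupport_fderiv_subset ℝ h))
  rw [(hasDerivAt_comp_line (hf.differentiable one_ne_zero) e z t).deriv,
    image_eq_zero_of_notMem_tsupport hnot, zero_apply]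

lemma convex_setOf_line_mem (hB : Convex ℝ B) (e z : E) : Convex ℝ {t : ℝ | z + t • e ∈ B} :=
  (hB.translate_preimage_right z).is_linear_preimage (LinearMap.toSpanSingleton ℝ E e).isLinear

lemma strictMonoOn_comp_line (hφ : ContDiff ℝ 1 φ) (hB : Convex ℝ B)
    (hpos : ∀ x ∈ B, 0 < fderiv ℝ φ x e) (z : E) :
    StrictMonoOn (fun t : ℝ => φ (z + t • e)) {t : ℝ | z + t • e ∈ B} := by
  refine strictMonoOn_of_deriv_pos (convex_setOf_line_mem hB e z)
    (contDiff_comp_line hφ e z).continuous.continuousOn fun t ht => ?_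
  rw [(hasDerivAt_comp_line (hφ.differentiable one_ne_zero) e z t).deriv]
  exact hpos _ (interior_subset (s := {t : ℝ | z + t • e ∈ B}) ht)

lemma lineFlux_eq_apply (hφ : ContDiff ℝ 1 φ) (hf : ContDiff ℝ 1 f) (hfc : HasCompactSupport f)
    (he : e ≠ 0) (hB : Convex ℝ B) (hfB : tsupport f ⊆ B) (hpos : ∀ x ∈ B, 0 < fderiv ℝ φ x e)
    {z : E} {t : ℝ} (ht : z + t • e ∈ B) (hφt : φ (z + t • e) = 0) :
    lineFlux φ f e z = f (z + t • e) := by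
  rw [lineFlux_eq_deriv (hf.differentiable one_ne_zero), setIntegral_deriv_pos_of_zero
    (contDiff_comp_line hφ e z).continuous (strictMonoOn_comp_line hφ hB hpos z)
    (contDiff_comp_line hf e z) (hasCompactSupport_comp_line hfc he z)
    (fun _ => deriv_comp_line_eq_zero hf hfB) ht hφt, neg_neg]

lemma exists_zero_of_lineFlux_ne_zero (hφ : ContDiff ℝ 1 φ) (hf : ContDiff ℝ 1 f)
    (hfc : HasCompactSupport f) (he : e ≠ 0) (hB : Convex ℝ B) (hfB : tsupport f ⊆ B) {z : E}
    (hz : lineFlux φ f e z ≠ 0) : ∃ t : ℝ, z + t • e ∈ B ∧ φ (z + t • e) = 0 := by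
  contrapose! hz
  rw [lineFlux_eq_deriv (hf.differentiable one_ne_zero), setIntegral_deriv_pos_of_ne_zero
    (contDiff_comp_line hφ e z).continuous (convex_setOf_line_mem hB e z).isPreconnected
    (contDiff_comp_line hf e z) (hasCompactSupport_comp_line hfc he z)
    (fun _ => deriv_comp_line_eq_zero hf hfB) hz, neg_zero]

end LineFlux

section Slicing

variable {E : Type*} [NormedAddCommGroup E] [InnerProductSpace ℝ E] {φ f : E → ℝ} {e : E}

lemma orthogonalProjectionOnto_add_inner_smul (he : ‖e‖ = 1) (x : E) :
    (((ℝ ∙ e)ᗮ.orthogonalProjectionOnto x : (ℝ ∙ e)ᗮ) : E) + inner ℝ e x • e = x := by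
  rw [← Submodule.starProjection_unit_singleton ℝ he x,
    Submodule.coe_orthogonalProjectionOnto_apply,
    add_comm]
  exact Submodule.starProjection_add_starProjection_orthogonal x

lemma orthogonalProjectionOnto_coe_add_smul (e : E) (y : (ℝ ∙ e)ᗮ) (t : ℝ) :
    (ℝ ∙ e)ᗮ.orthogonalProjectionOnto ((y : E) + t • e) = y := by
  have he : (ℝ ∙ e)ᗮ.orthogonalProjectionOnto e = 0 :=
    Submodule.orthogonalProjectionOnto_orthogonal_apply_eq_zero
      (Submodule.mem_span_singleton_self e)
  simp [he]

lemma lineFlux_eq_integral_indicator (hφ : Continuous φ) (z : E) :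
    lineFlux φ f e z = -∫ t : ℝ, {x | 0 < φ x}.indicator (fun x => fderiv ℝ f x e) (z + t • e) := by
  rw [lineFlux, ← integral_indicator (measurableSet_lt measurable_const
    (by fun_prop : Continuous fun t : ℝ => φ (z + t • e)).measurable)]
  rfl

variable [MeasurableSpace E] [BorelSpace E]

lemma measurable_lineFlux (hφ : Continuous φ) (hf : ContDiff ℝ 1 f) (e : E) :
    Measurable fun y : (ℝ ∙ e)ᗮ => lineFlux φ f e y := by
  simp_rw [lineFlux_eq_integral_indicator hφ]
  have hmeas : Measurable ({x | 0 < φ x}.indicator fun x => fderiv ℝ f x e) :=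
    ((hf.continuous_fderiv one_ne_zero).clm_apply continuous_const).measurable.indicator
      (measurableSet_lt measurable_const hφ.measurable)
  exact (hmeas.comp (by fun_prop : Continuous fun p : (ℝ ∙ e)ᗮ × ℝ =>
    (p.1 : E) + p.2 • e).measurable).stronglyMeasurable.integral_prod_right'.measurable.neg

variable [FiniteDimensional ℝ E]

lemma measurePreserving_orthogonal_add_smul (he : ‖e‖ = 1) :
    MeasurePreserving (fun p : (ℝ ∙ e)ᗮ × ℝ => (p.1 : E) + p.2 • e) (volume.prod volume)
      volume := by
  have hspan : MeasurePreserving (LinearIsometryEquiv.toSpanUnitSingleton (𝕜 := ℝ) e he) :=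
    LinearIsometryEquiv.measurePreserving _
  have hsplit := ((ℝ ∙ e).measurePreserving_measurableEquivProd (0 : E)).symm
  rw [InnerProductSpace.euclideanHausdorffMeasure_eq_volume] at hsplit
  have hcomp : (fun p : (ℝ ∙ e)ᗮ × ℝ => (p.1 : E) + p.2 • e) =
      ((ℝ ∙ e).measurableEquivProd 0).symm ∘
      Prod.map (LinearIsometryEquiv.toSpanUnitSingleton (𝕜 := ℝ) e he) id ∘ Prod.swap := by
    ext p
    simp [add_comm]
  rw [hcomp]
  exact hsplit.comp ((hspan.prod (MeasurePreserving.id volume)).comp Measure.measurePreserving_swap)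

lemma integrable_comp_orthogonal_add_smul {g : E → ℝ} (he : ‖e‖ = 1) (hg : Integrable g) :
    Integrable (fun p : (ℝ ∙ e)ᗮ × ℝ => g ((p.1 : E) + p.2 • e)) (volume.prod volume) :=
  (measurePreserving_orthogonal_add_smul he).integrable_comp_of_integrable hg

lemma integral_orthogonal_integral_line {g : E → ℝ} (he : ‖e‖ = 1) (hg : Integrable g) :
    ∫ y : (ℝ ∙ e)ᗮ, ∫ t : ℝ, g ((y : E) + t • e) = ∫ x, g x := by
  have hpres := measurePreserving_orthogonal_add_smul he
  rw [← integral_prod _ (integrable_comp_orthogonal_add_smul he hg), ← hpres.map_eq,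
    integral_map hpres.aemeasurable (hpres.map_eq.symm ▸ hg.aestronglyMeasurable)]

lemma integrable_indicator_fderiv_apply (hφ : Continuous φ) (hf : ContDiff ℝ 1 f)
    (hfc : HasCompactSupport f) (e : E) :
    Integrable ({x | 0 < φ x}.indicator fun x => fderiv ℝ f x e) :=
  (((hf.continuous_fderiv one_ne_zero).clm_apply continuous_const).integrable_of_hasCompactSupport
    (hfc.fderiv_apply ℝ e)).indicator (measurableSet_lt measurable_const hφ.measurable)

lemma integrable_lineFlux (hφ : Continuous φ) (hf : ContDiff ℝ 1 f) (hfc : HasCompactSupport f)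
    (he : ‖e‖ = 1) : Integrable fun y : (ℝ ∙ e)ᗮ => lineFlux φ f e y := by
  simp_rw [lineFlux_eq_integral_indicator hφ]
  exact (integrable_comp_orthogonal_add_smul he
    (integrable_indicator_fderiv_apply hφ hf hfc e)).integral_prod_left.neg

theorem integral_lineFlux (hφ : Continuous φ) (hf : ContDiff ℝ 1 f) (hfc : HasCompactSupport f)
    (he : ‖e‖ = 1) :
    ∫ y : (ℝ ∙ e)ᗮ, lineFlux φ f e y = flux φ (f • fun _ => e) := by
  simp_rw [lineFlux_eq_integral_indicator hφ, flux,
    divergence_smul_const (hf.differentiable one_ne_zero _)]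
  rw [integral_neg, integral_orthogonal_integral_line he
    (integrable_indicator_fderiv_apply hφ hf hfc e),
    integral_indicator (measurableSet_lt measurable_const hφ.measurable)]

end Slicing

section HausdorffComparison

variable {X Y : Type*} [MetricSpace X] [MeasurableSpace X] [BorelSpace X]
  [MetricSpace Y] [MeasurableSpace Y] [BorelSpace Y] {P : X → Y} {S : Set X} {K : ℝ≥0}

lemma map_restrict_euclideanHausdorffMeasure_le (hP : Measurable P)
    (hPS : AntilipschitzWith K (S.domRestrict P)) (d : ℕ) :
    ((μHE[d] : Measure X).restrict S).map P ≤ (K : ℝ≥0∞) ^ d • (μHE[d] : Measure Y) := by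
  refine Measure.le_iff.2 fun A hA => ?_
  have himage : P ⁻¹' A ∩ S = Subtype.val '' (S.domRestrict P ⁻¹' A) := by
    rw [domRestrict_eq, preimage_comp, Subtype.image_preimage_val, inter_comm]
  rw [Measure.map_apply hP hA, Measure.restrict_apply (hP hA), himage,
    isometry_subtype_coe.euclideanHausdorffMeasure_image]
  simp only [Measure.euclideanHausdorffMeasure_def, Measure.smul_apply]
  rw [smul_comm]
  gcongr
  simpa using hPS.hausdorffMeasure_preimage_le d.cast_nonneg A

lemma restrict_image_euclideanHausdorffMeasure_le_map (hP : LipschitzWith 1 P) (S : Set X) (d : ℕ) :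
    (μHE[d] : Measure Y).restrict (P '' S) ≤ ((μHE[d] : Measure X).restrict S).map P := by
  have hPm := hP.continuous.measurable
  refine Measure.le_iff.2 fun A hA => ?_
  rw [Measure.map_apply hPm hA, Measure.restrict_apply (hPm hA), Measure.restrict_apply hA,
    inter_comm A, ← image_inter_preimage, inter_comm S]
  simp only [Measure.euclideanHausdorffMeasure_def, Measure.smul_apply]
  gcongr
  simpa using hP.hausdorffMeasure_image_le d.cast_nonneg (P ⁻¹' A ∩ S)

end HausdorffComparison

section GraphComparison

variable {E : Type*} [NormedAddCommGroup E] [InnerProductSpace ℝ E] {φ f : E → ℝ} {B : Set E}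
  {e : E}

lemma lineFlux_orthogonalProjectionOnto (hφ : ContDiff ℝ 1 φ) (hf : ContDiff ℝ 1 f)
    (hfc : HasCompactSupport f) (he : ‖e‖ = 1) (hB : Convex ℝ B) (hfB : tsupport f ⊆ B)
    (hpos : ∀ x ∈ B, 0 < fderiv ℝ φ x e) {x : E} (hx : x ∈ B) (hφx : φ x = 0) :
    lineFlux φ f e ((ℝ ∙ e)ᗮ.orthogonalProjectionOnto x) = f x := by
  have hline := orthogonalProjectionOnto_add_inner_smul he x
  rw [lineFlux_eq_apply hφ hf hfc (norm_ne_zero_iff.1 (he ▸ one_ne_zero)) hB hfB hpos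
    (t := inner ℝ e x) (by rwa [hline]) (by rwa [hline]), hline]

lemma mem_image_orthogonalProjectionOnto_of_lineFlux_ne_zero (hφ : ContDiff ℝ 1 φ)
    (hf : ContDiff ℝ 1 f) (hfc : HasCompactSupport f) (he : e ≠ 0) (hB : Convex ℝ B)
    (hfB : tsupport f ⊆ B) {y : (ℝ ∙ e)ᗮ} (hy : lineFlux φ f e y ≠ 0) :
    y ∈ (ℝ ∙ e)ᗮ.orthogonalProjectionOnto '' (B ∩ {x | φ x = 0}) := by
  obtain ⟨t, ht⟩ := exists_zero_of_lineFlux_ne_zero hφ hf hfc he hB hfB hy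
  exact ⟨_, ht, orthogonalProjectionOnto_coe_add_smul e y t⟩

lemma lineFlux_nonneg (hφ : ContDiff ℝ 1 φ) (hf : ContDiff ℝ 1 f) (hfc : HasCompactSupport f)
    (hf0 : 0 ≤ f) (he : e ≠ 0) (hB : Convex ℝ B) (hfB : tsupport f ⊆ B)
    (hpos : ∀ x ∈ B, 0 < fderiv ℝ φ x e) (z : E) : 0 ≤ lineFlux φ f e z := by
  by_cases hz : lineFlux φ f e z = 0
  · exact hz.ge
  · obtain ⟨t, ht, hφt⟩ := exists_zero_of_lineFlux_ne_zero hφ hf hfc he hB hfB hz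
    rw [lineFlux_eq_apply hφ hf hfc he hB hfB hpos ht hφt]
    exact hf0 _

lemma finrank_orthogonal_span_singleton_eq_sub_one [FiniteDimensional ℝ E]
    (he : e ≠ 0) : finrank ℝ (ℝ ∙ e)ᗮ = finrank ℝ E - 1 := by
  have := (ℝ ∙ e).finrank_add_finrank_orthogonal
  rw [finrank_span_singleton he] at this
  omega

variable [MeasurableSpace E] [BorelSpace E]

lemma setLIntegral_zeroSet_eq_lineFlux (hφ : ContDiff ℝ 1 φ) (hf : ContDiff ℝ 1 f)
    (hfc : HasCompactSupport f) (he : ‖e‖ = 1) (hBm : MeasurableSet B) (hB : Convex ℝ B)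
    (hfB : tsupport f ⊆ B) (hpos : ∀ x ∈ B, 0 < fderiv ℝ φ x e) (μ : Measure E) :
    ∫⁻ x in {x | φ x = 0}, ENNReal.ofReal (f x) ∂μ =
      ∫⁻ x in B ∩ {x | φ x = 0},
        ENNReal.ofReal (lineFlux φ f e ((ℝ ∙ e)ᗮ.orthogonalProjectionOnto x)) ∂μ := by
  have hzero : MeasurableSet {x | φ x = 0} :=
    (isClosed_eq hφ.continuous continuous_const).measurableSet
  have hoff : ∀ x ∉ B, f x = 0 := fun x hx => image_eq_zero_of_notMem_tsupport (mt (@hfB x) hx)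
  rw [← lintegral_indicator hzero, ← lintegral_indicator (hBm.inter hzero)]
  congr 1 with x
  by_cases hx : x ∈ B
  · by_cases hφx : φ x = 0
    · rw [indicator_of_mem (s := {x | φ x = 0}) hφx,
        indicator_of_mem (s := B ∩ {x | φ x = 0}) ⟨hx, hφx⟩,
        lineFlux_orthogonalProjectionOnto hφ hf hfc he hB hfB hpos hx hφx]
    · simp [hφx]
  · simp [indicator_apply, hx, hoff x hx]

variable [FiniteDimensional ℝ E]

lemma euclideanHausdorffMeasure_orthogonal_eq_volume (he : e ≠ 0) :
    (μHE[finrank ℝ E - 1] : Measure (ℝ ∙ e)ᗮ) = volume := by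
  rw [← finrank_orthogonal_span_singleton_eq_sub_one he,
    InnerProductSpace.euclideanHausdorffMeasure_eq_volume]

lemma flux_smul_const_nonneg (hφ : ContDiff ℝ 1 φ) (hf : ContDiff ℝ 1 f)
    (hfc : HasCompactSupport f) (hf0 : 0 ≤ f) (he : ‖e‖ = 1) (hB : Convex ℝ B)
    (hfB : tsupport f ⊆ B) (hpos : ∀ x ∈ B, 0 < fderiv ℝ φ x e) :
    0 ≤ flux φ (f • fun _ => e) := by
  rw [← integral_lineFlux hφ.continuous hf hfc he]
  exact integral_nonneg fun y => lineFlux_nonneg hφ hf hfc hf0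
    (norm_ne_zero_iff.1 (he ▸ one_ne_zero)) hB hfB hpos y

lemma ofReal_flux_smul_const (hφ : ContDiff ℝ 1 φ) (hf : ContDiff ℝ 1 f)
    (hfc : HasCompactSupport f) (hf0 : 0 ≤ f) (he : ‖e‖ = 1) (hB : Convex ℝ B)
    (hfB : tsupport f ⊆ B) (hpos : ∀ x ∈ B, 0 < fderiv ℝ φ x e) :
    ENNReal.ofReal (flux φ (f • fun _ => e)) =
      ∫⁻ y : (ℝ ∙ e)ᗮ, ENNReal.ofReal (lineFlux φ f e y) ∂μHE[finrank ℝ E - 1] := by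
  have he0 : e ≠ 0 := norm_ne_zero_iff.1 (he ▸ one_ne_zero)
  rw [euclideanHausdorffMeasure_orthogonal_eq_volume he0,
    ← integral_lineFlux hφ.continuous hf hfc he,
    ofReal_integral_eq_lintegral_ofReal (integrable_lineFlux hφ.continuous hf hfc he)
      (.of_forall fun y => lineFlux_nonneg hφ hf hfc hf0 he0 hB hfB hpos y)]

theorem setLIntegral_zeroSet_le_flux (hφ : ContDiff ℝ 1 φ) (hf : ContDiff ℝ 1 f)
    (hfc : HasCompactSupport f) (hf0 : 0 ≤ f) (he : ‖e‖ = 1) (hBm : MeasurableSet B)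
    (hB : Convex ℝ B) (hfB : tsupport f ⊆ B) (hpos : ∀ x ∈ B, 0 < fderiv ℝ φ x e) {K : ℝ≥0}
    (hK : AntilipschitzWith K ((B ∩ {x | φ x = 0}).domRestrict (ℝ ∙ e)ᗮ.orthogonalProjectionOnto)) :
    ∫⁻ x in {x | φ x = 0}, ENNReal.ofReal (f x) ∂μHE[finrank ℝ E - 1] ≤
      (K : ℝ≥0∞) ^ (finrank ℝ E - 1) * ENNReal.ofReal (flux φ (f • fun _ => e)) := by
  have hP : Measurable (ℝ ∙ e)ᗮ.orthogonalProjectionOnto := ContinuousLinearMap.measurable _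
  rw [setLIntegral_zeroSet_eq_lineFlux hφ hf hfc he hBm hB hfB hpos,
    ofReal_flux_smul_const hφ hf hfc hf0 he hB hfB hpos,
    ← lintegral_map (measurable_lineFlux hφ.continuous hf e).ennreal_ofReal hP,
    ← smul_eq_mul, ← lintegral_smul_measure]
  exact lintegral_mono' (map_restrict_euclideanHausdorffMeasure_le hP hK _) le_rfl

theorem flux_le_setLIntegral_zeroSet (hφ : ContDiff ℝ 1 φ) (hf : ContDiff ℝ 1 f)
    (hfc : HasCompactSupport f) (hf0 : 0 ≤ f) (he : ‖e‖ = 1) (hBm : MeasurableSet B)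
    (hB : Convex ℝ B) (hfB : tsupport f ⊆ B) (hpos : ∀ x ∈ B, 0 < fderiv ℝ φ x e) :
    ENNReal.ofReal (flux φ (f • fun _ => e)) ≤
      ∫⁻ x in {x | φ x = 0}, ENNReal.ofReal (f x) ∂μHE[finrank ℝ E - 1] := by
  have hP := (ℝ ∙ e)ᗮ.lipschitzWith_orthogonalProjectionOnto
  have hsupp : (Function.support fun y : (ℝ ∙ e)ᗮ => ENNReal.ofReal (lineFlux φ f e y)) ⊆
      (ℝ ∙ e)ᗮ.orthogonalProjectionOnto '' (B ∩ {x | φ x = 0}) := fun y hy =>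
    mem_image_orthogonalProjectionOnto_of_lineFlux_ne_zero hφ hf hfc
      (norm_ne_zero_iff.1 (he ▸ one_ne_zero)) hB hfB fun h => hy (by simp [h])
  rw [setLIntegral_zeroSet_eq_lineFlux hφ hf hfc he hBm hB hfB hpos,
    ofReal_flux_smul_const hφ hf hfc hf0 he hB hfB hpos,
    ← lintegral_map (measurable_lineFlux hφ.continuous hf e).ennreal_ofReal
      hP.continuous.measurable, ← setLIntegral_eq_of_support_subset hsupp]
  exact lintegral_mono' (restrict_image_euclideanHausdorffMeasure_le_map hP _ _) le_rfl

end GraphComparison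

section GradientField

variable {E : Type*} [NormedAddCommGroup E]

lemma contDiff_div_of_tsupport [NormedSpace ℝ E] {w d : E → ℝ} (hw : ContDiff ℝ 1 w)
    (hd : ContDiff ℝ 1 d) (h : ∀ x ∈ tsupport w, d x ≠ 0) : ContDiff ℝ 1 fun x => w x / d x := by
  refine contDiff_iff_contDiffAt.2 fun x => ?_
  by_cases hx : x ∈ tsupport w
  · exact hw.contDiffAt.div hd.contDiffAt (h x hx)
  · refine (contDiffAt_const (c := 0)).congr_of_eventuallyEq ?_
    filter_upwards [notMem_tsupport_iff_eventuallyEq.1 hx] with y hy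
    simp [hy]

variable [InnerProductSpace ℝ E] [CompleteSpace E] {φ : E → ℝ} {B : Set E} {e x : E} {a κ : ℝ}

lemma contDiff_gradient (hφ : ContDiff ℝ 2 φ) : ContDiff ℝ 1 (∇ φ) :=
  (InnerProductSpace.toDual ℝ E).symm.contDiff.comp (hφ.fderiv_right (m := 1) (by norm_num))

lemma continuous_gradient (hφ : ContDiff ℝ 1 φ) : Continuous (∇ φ) :=
  (InnerProductSpace.toDual ℝ E).symm.continuous.comp (hφ.continuous_fderiv one_ne_zero)

lemma fderiv_apply_gradient : fderiv ℝ φ x (∇ φ x) = ‖∇ φ x‖ ^ 2 := by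
  rw [← inner_gradient_left, real_inner_self_eq_norm_sq]

lemma fderiv_apply_le_norm_gradient (he : ‖e‖ = 1) : fderiv ℝ φ x e ≤ ‖∇ φ x‖ := by
  rw [← inner_gradient_left]
  simpa [he] using real_inner_le_norm (∇ φ x) e

lemma one_sub_mul_le_fderiv_apply (he : ‖e‖ = 1) (hx : ‖∇ φ x - a • e‖ ≤ κ * a) :
    (1 - κ) * a ≤ fderiv ℝ φ x e := by
  have hinner : inner ℝ (∇ φ x - a • e) e = fderiv ℝ φ x e - a := by
    rw [inner_sub_left, inner_gradient_left, real_inner_smul_left, real_inner_self_eq_norm_sq, he]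
    ring
  have hle := abs_real_inner_le_norm (∇ φ x - a • e) e
  rw [hinner, he, mul_one] at hle
  linarith [(abs_le.1 (hle.trans hx)).1]

lemma norm_gradient_le_one_add_mul (ha : 0 ≤ a) (he : ‖e‖ = 1)
    (hx : ‖∇ φ x - a • e‖ ≤ κ * a) : ‖∇ φ x‖ ≤ (1 + κ) * a := by
  have hle := norm_le_norm_add_norm_sub' (∇ φ x) (a • e)
  rw [norm_smul, he, Real.norm_of_nonneg ha] at hle
  linarith

/-- Subtracting the linear function `a ⟪e, ·⟫` leaves a `κ a`-Lipschitz function, so chords of the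
zero set are nearly orthogonal to `e`. -/
lemma abs_inner_sub_le_of_gradient_near (hφ : Differentiable ℝ φ) (hB : Convex ℝ B) (ha : 0 < a)
    (hnear : ∀ x ∈ B, ‖∇ φ x - a • e‖ ≤ κ * a) {x y : E} (hx : x ∈ B) (hy : y ∈ B)
    (hφx : φ x = 0) (hφy : φ y = 0) : |inner ℝ e (x - y)| ≤ κ * ‖x - y‖ := by
  have hfderiv : ∀ z ∈ B, ‖fderiv ℝ φ z - InnerProductSpace.toDual ℝ E (a • e)‖ ≤ κ * a := by
    intro z hz
    rw [← toDual_gradient, ← map_sub, LinearIsometryEquiv.norm_map]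
    exact hnear z hz
  have hle := hB.norm_image_sub_le_of_norm_fderiv_le' (fun z _ => hφ z) hfderiv hy hx
  rw [hφx, hφy, sub_zero, zero_sub, norm_neg, InnerProductSpace.toDual_apply_apply,
    real_inner_smul_left, Real.norm_eq_abs, abs_mul, abs_of_pos ha] at hle
  exact le_of_mul_le_mul_left (by linarith) ha

lemma antilipschitzWith_orthogonalProjectionOnto_of_gradient_near (hφ : Differentiable ℝ φ)
    (hB : Convex ℝ B) (ha : 0 < a) (he : ‖e‖ = 1) (hκ : κ < 1)
    (hnear : ∀ x ∈ B, ‖∇ φ x - a • e‖ ≤ κ * a) :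
    AntilipschitzWith (1 - κ)⁻¹.toNNReal
      ((B ∩ {x | φ x = 0}).domRestrict (ℝ ∙ e)ᗮ.orthogonalProjectionOnto) := by
  refine AntilipschitzWith.of_le_mul_dist fun ⟨x, hx, hφx⟩ ⟨y, hy, hφy⟩ => ?_
  have hinner := abs_inner_sub_le_of_gradient_near hφ hB ha hnear hx hy hφx hφy
  have hdecomp := orthogonalProjectionOnto_add_inner_smul he (x - y)
  have hle := norm_add_le ((ℝ ∙ e)ᗮ.orthogonalProjectionOnto (x - y) : E) (inner ℝ e (x - y) • e)
  rw [hdecomp, norm_smul, he, mul_one, Real.norm_eq_abs] at hle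
  rw [Subtype.dist_eq, dist_eq_norm, Real.coe_toNNReal _ (inv_nonneg.2 (by linarith)),
    ← div_eq_inv_mul, le_div_iff₀ (by linarith), dist_eq_norm, domRestrict_apply,
    domRestrict_apply, ← map_sub]
  have : ‖(ℝ ∙ e)ᗮ.orthogonalProjectionOnto (x - y)‖ =
    ‖((ℝ ∙ e)ᗮ.orthogonalProjectionOnto (x - y) : E)‖ := rfl
  linarith

end GradientField

section ObliqueWeight

variable {E : Type*} [NormedAddCommGroup E] [InnerProductSpace ℝ E] [CompleteSpace E]
  {φ w : E → ℝ} {e : E} {a κ : ℝ}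

/-- The weight `f` for which `f e` and `w ∇φ` have the same component normal to the level sets
of `φ`. -/
def obliqueWeight (φ w : E → ℝ) (e x : E) : ℝ :=
  w x * ‖∇ φ x‖ ^ 2 / fderiv ℝ φ x e

lemma contDiff_obliqueWeight (hφ : ContDiff ℝ 2 φ) (hw : ContDiff ℝ 1 w)
    (he : ∀ x ∈ tsupport w, fderiv ℝ φ x e ≠ 0) : ContDiff ℝ 1 (obliqueWeight φ w e) :=
  contDiff_div_of_tsupport (hw.mul ((contDiff_gradient hφ).norm_sq ℝ))
    ((hφ.fderiv_right (m := 1) (by norm_num)).clm_apply contDiff_const)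
    fun x hx => he x (tsupport_mul_subset_left hx)

lemma tsupport_obliqueWeight_subset (φ w : E → ℝ) (e : E) :
    tsupport (obliqueWeight φ w e) ⊆ tsupport w :=
  closure_mono fun x => mt fun hx => by simp [obliqueWeight, hx]

lemma hasCompactSupport_obliqueWeight (φ : E → ℝ) (hwc : HasCompactSupport w) (e : E) :
    HasCompactSupport (obliqueWeight φ w e) :=
  hwc.of_isClosed_subset (isClosed_tsupport _) (tsupport_obliqueWeight_subset φ w e)

lemma mul_norm_gradient_le_obliqueWeight (hw0 : 0 ≤ w) (he1 : ‖e‖ = 1)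
    (he : ∀ x ∈ tsupport w, 0 < fderiv ℝ φ x e) (x : E) :
    w x * ‖∇ φ x‖ ≤ obliqueWeight φ w e x := by
  by_cases hx : x ∈ tsupport w
  · rw [obliqueWeight, le_div_iff₀ (he x hx), pow_two, ← mul_assoc]
    exact mul_le_mul_of_nonneg_left (fderiv_apply_le_norm_gradient he1)
      (mul_nonneg (hw0 x) (norm_nonneg _))
  · simp [obliqueWeight, image_eq_zero_of_notMem_tsupport hx]

lemma obliqueWeight_le_mul (hw0 : 0 ≤ w) (ha : 0 < a) (he1 : ‖e‖ = 1) (hκ : κ < 1)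
    (hnear : ∀ x ∈ tsupport w, ‖∇ φ x - a • e‖ ≤ κ * a) (x : E) :
    obliqueWeight φ w e x ≤ (1 + κ) / (1 - κ) * (w x * ‖∇ φ x‖) := by
  by_cases hx : x ∈ tsupport w
  · have hκ0 : 0 ≤ κ := nonneg_of_mul_nonneg_left ((norm_nonneg _).trans (hnear x hx)) ha
    have hderiv := one_sub_mul_le_fderiv_apply he1 (hnear x hx)
    have hpos : 0 < fderiv ℝ φ x e := (mul_pos (sub_pos.2 hκ) ha).trans_le hderiv
    have hratio : ‖∇ φ x‖ * (1 - κ) ≤ (1 + κ) * fderiv ℝ φ x e :=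
      calc ‖∇ φ x‖ * (1 - κ) ≤ (1 + κ) * a * (1 - κ) :=
            mul_le_mul_of_nonneg_right (norm_gradient_le_one_add_mul ha.le he1 (hnear x hx))
              (sub_nonneg.2 hκ.le)
        _ = (1 + κ) * ((1 - κ) * a) := by ring
        _ ≤ (1 + κ) * fderiv ℝ φ x e := by gcongr
    rw [obliqueWeight, div_le_iff₀ hpos, div_mul_eq_mul_div, div_mul_eq_mul_div,
      le_div_iff₀ (sub_pos.2 hκ)]
    linarith [mul_le_mul_of_nonneg_left hratio (mul_nonneg (hw0 x) (norm_nonneg (∇ φ x)))]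
  · simp [obliqueWeight, image_eq_zero_of_notMem_tsupport hx]

end ObliqueWeight

section NodalMeasure

variable {E : Type*} [NormedAddCommGroup E] [InnerProductSpace ℝ E] [CompleteSpace E]
  [MeasurableSpace E] [BorelSpace E]

/-- The measure `‖∇φ‖ d𝓗ᵈ⁻¹` on the zero set of `φ`, where `d = dim E` and the Hausdorff measure is
normalized to agree with Lebesgue measure on hyperplanes. -/
def nodalMeasure (φ : E → ℝ) : Measure E :=
  ((μHE[finrank ℝ E - 1] : Measure E).restrict {x | φ x = 0}).withDensity fun x => ‖∇ φ x‖ₑ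

variable {φ : E → ℝ}

lemma lintegral_nodalMeasure_eq_setLIntegral (hφ : ContDiff ℝ 1 φ) {w : E → ℝ}
    (hw : Continuous w) :
    ∫⁻ x, ENNReal.ofReal (w x) ∂nodalMeasure φ =
      ∫⁻ x in {x | φ x = 0}, ENNReal.ofReal (w x * ‖∇ φ x‖) ∂μHE[finrank ℝ E - 1] := by
  rw [nodalMeasure, lintegral_withDensity_eq_lintegral_mul _
    (continuous_gradient hφ).enorm.measurable hw.measurable.ennreal_ofReal]
  refine lintegral_congr fun x => ?_
  rw [Pi.mul_apply, mul_comm, ENNReal.ofReal_mul' (norm_nonneg _), ofReal_norm]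

end NodalMeasure

section FluxComparison

variable {E : Type*} [NormedAddCommGroup E] [InnerProductSpace ℝ E] [FiniteDimensional ℝ E]
  [MeasurableSpace E] [BorelSpace E] {φ w : E → ℝ}

/-- The integral of the weight `w` against the nodal measure of `φ` and the flux of `w ∇φ` agree up
to the factor `C`. -/
def FluxComparable (C : ℝ≥0) (φ w : E → ℝ) : Prop :=
  0 ≤ flux φ (w • ∇ φ) ∧
    ∫⁻ x, ENNReal.ofReal (w x) ∂nodalMeasure φ ≤ C * ENNReal.ofReal (flux φ (w • ∇ φ)) ∧
    ENNReal.ofReal (flux φ (w • ∇ φ)) ≤ C * ∫⁻ x, ENNReal.ofReal (w x) ∂nodalMeasure φ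

lemma fluxComparable_zero (C : ℝ≥0) : FluxComparable C φ 0 := by
  simp [FluxComparable, flux_zero]

lemma FluxComparable.add {C : ℝ≥0} {v : E → ℝ} (hφ : ContDiff ℝ 2 φ) (hv : ContDiff ℝ 1 v)
    (hvc : HasCompactSupport v) (hv0 : 0 ≤ v) (hw : ContDiff ℝ 1 w) (hwc : HasCompactSupport w)
    (hw0 : 0 ≤ w) (hvC : FluxComparable C φ v) (hwC : FluxComparable C φ w) :
    FluxComparable C φ (v + w) := by
  obtain ⟨hv1, hv2, hv3⟩ := hvC
  obtain ⟨hw1, hw2, hw3⟩ := hwC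
  have hgrad := contDiff_gradient hφ
  have hflux : flux φ ((v + w) • ∇ φ) = flux φ (v • ∇ φ) + flux φ (w • ∇ φ) := by
    rw [add_smul, flux_add (hv.smul hgrad) hvc.smul_right (hw.smul hgrad) hwc.smul_right]
  have hint : ∫⁻ x, ENNReal.ofReal ((v + w) x) ∂nodalMeasure φ =
      ∫⁻ x, ENNReal.ofReal (v x) ∂nodalMeasure φ + ∫⁻ x, ENNReal.ofReal (w x) ∂nodalMeasure φ := by
    rw [← lintegral_add_left hv.continuous.measurable.ennreal_ofReal]
    simp only [Pi.add_apply, ENNReal.ofReal_add (hv0 _) (hw0 _)]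
  rw [FluxComparable, hflux, hint, ENNReal.ofReal_add hv1 hw1, mul_add, mul_add]
  exact ⟨add_nonneg hv1 hw1, add_le_add hv2 hw2, add_le_add hv3 hw3⟩

lemma fluxComparable_sum {ι : Type*} {C : ℝ≥0} (hφ : ContDiff ℝ 2 φ) {s : Finset ι}
    {v : ι → E → ℝ} (hv : ∀ i ∈ s, ContDiff ℝ 1 (v i)) (hvc : ∀ i ∈ s, HasCompactSupport (v i))
    (hv0 : ∀ i ∈ s, 0 ≤ v i) (hvC : ∀ i ∈ s, FluxComparable C φ (v i)) :
    FluxComparable C φ (∑ i ∈ s, v i) :=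
  (Finset.sum_induction v
    (fun w => ContDiff ℝ 1 w ∧ HasCompactSupport w ∧ 0 ≤ w ∧ FluxComparable C φ w)
    (fun _ _ ⟨h1, h2, h3, h4⟩ ⟨k1, k2, k3, k4⟩ =>
      ⟨h1.add k1, h2.add k2, add_nonneg h3 k3, h4.add hφ h1 h2 h3 k1 k2 k3 k4⟩)
    ⟨contDiff_const, HasCompactSupport.zero, le_rfl, fluxComparable_zero C⟩
    fun i hi => ⟨hv i hi, hvc i hi, hv0 i hi, hvC i hi⟩).2.2.2

variable {e : E} {a κ : ℝ}

/-- The difference of the two fields is tangent to the level sets of `φ`. -/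
lemma flux_smul_gradient_eq_flux_obliqueWeight (hφ : ContDiff ℝ 2 φ) (hw : ContDiff ℝ 1 w)
    (hwc : HasCompactSupport w) (he : ∀ x ∈ tsupport w, fderiv ℝ φ x e ≠ 0) :
    flux φ (w • ∇ φ) = flux φ (obliqueWeight φ w e • fun _ => e) := by
  have hX : ContDiff ℝ 1 (w • ∇ φ) := hw.smul (contDiff_gradient hφ)
  have hY : ContDiff ℝ 1 (obliqueWeight φ w e • fun _ : E => e) :=
    (contDiff_obliqueWeight hφ hw he).smul contDiff_const
  have hXc : HasCompactSupport (w • ∇ φ) := hwc.smul_right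
  have hYc : HasCompactSupport (obliqueWeight φ w e • fun _ : E => e) :=
    (hasCompactSupport_obliqueWeight φ hwc e).smul_right
  have htangent : ∀ x, fderiv ℝ φ x ((w • ∇ φ - (obliqueWeight φ w e • fun _ : E => e)) x) =
      φ x * 0 := by
    intro x
    simp only [Pi.sub_apply, Pi.smul_apply', map_sub, map_smul, fderiv_apply_gradient, smul_eq_mul,
      mul_zero, obliqueWeight]
    by_cases hx : x ∈ tsupport w
    · rw [div_mul_cancel₀ _ (he x hx), sub_self]
    · simp [image_eq_zero_of_notMem_tsupport hx]
  have hzero := flux_eq_zero_of_fderiv_apply_eq_mul (hφ.of_le one_le_two) (hX.sub hY)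
    (hXc.sub hYc) (integrable_zero _ _ _) htangent
  exact sub_eq_zero.1 ((flux_sub hX hXc hY hYc).symm.trans hzero)

/-- The comparison constants come from the slope of the zero set, which is a graph over the
hyperplane orthogonal to `e`. -/
lemma fluxComparable_of_gradient_near {B : Set E} (hφ : ContDiff ℝ 2 φ) (hBm : MeasurableSet B)
    (hB : Convex ℝ B) (ha : 0 < a) (he : ‖e‖ = 1) (hκ : κ < 1)
    (hnear : ∀ x ∈ B, ‖∇ φ x - a • e‖ ≤ κ * a) (hw : ContDiff ℝ 1 w)
    (hwc : HasCompactSupport w) (hw0 : 0 ≤ w) (hwB : tsupport w ⊆ B) {C : ℝ≥0}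
    (hC₁ : (1 - κ)⁻¹.toNNReal ^ (finrank ℝ E - 1) ≤ C) (hC₂ : ((1 + κ) / (1 - κ)).toNNReal ≤ C) :
    FluxComparable C φ w := by
  have hφ1 : ContDiff ℝ 1 φ := hφ.of_le one_le_two
  have hpos : ∀ x ∈ B, 0 < fderiv ℝ φ x e := fun x hx =>
    (mul_pos (sub_pos.2 hκ) ha).trans_le (one_sub_mul_le_fderiv_apply he (hnear x hx))
  have hposw : ∀ x ∈ tsupport w, 0 < fderiv ℝ φ x e := fun x hx => hpos x (hwB hx)
  have hf := contDiff_obliqueWeight hφ hw fun x hx => (hposw x hx).ne'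
  have hfc := hasCompactSupport_obliqueWeight φ hwc e
  have hlow := mul_norm_gradient_le_obliqueWeight hw0 he hposw
  have hf0 : 0 ≤ obliqueWeight φ w e := fun x =>
    (mul_nonneg (hw0 x) (norm_nonneg _)).trans (hlow x)
  have hfB := (tsupport_obliqueWeight_subset φ w e).trans hwB
  have hhigh := obliqueWeight_le_mul hw0 ha he hκ fun x hx => hnear x (hwB hx)
  rw [FluxComparable, lintegral_nodalMeasure_eq_setLIntegral hφ1 hw.continuous,
    flux_smul_gradient_eq_flux_obliqueWeight hφ hw hwc fun x hx => (hposw x hx).ne']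
  refine ⟨flux_smul_const_nonneg hφ1 hf hfc hf0 he hB hfB hpos, ?_, ?_⟩
  · calc ∫⁻ x in {x | φ x = 0}, ENNReal.ofReal (w x * ‖∇ φ x‖) ∂μHE[finrank ℝ E - 1]
        ≤ ∫⁻ x in {x | φ x = 0}, ENNReal.ofReal (obliqueWeight φ w e x) ∂μHE[finrank ℝ E - 1] :=
          lintegral_mono fun x => ENNReal.ofReal_le_ofReal (hlow x)
      _ ≤ _ := setLIntegral_zeroSet_le_flux hφ1 hf hfc hf0 he hBm hB hfB hpos
          (antilipschitzWith_orthogonalProjectionOnto_of_gradient_near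
            (hφ1.differentiable one_ne_zero) hB ha he hκ hnear)
      _ ≤ _ := by gcongr; exact_mod_cast hC₁
  · calc ENNReal.ofReal (flux φ (obliqueWeight φ w e • fun _ => e))
        ≤ ∫⁻ x in {x | φ x = 0}, ENNReal.ofReal (obliqueWeight φ w e x) ∂μHE[finrank ℝ E - 1] :=
          flux_le_setLIntegral_zeroSet hφ1 hf hfc hf0 he hBm hB hfB hpos
      _ ≤ ∫⁻ x in {x | φ x = 0}, C * ENNReal.ofReal (w x * ‖∇ φ x‖) ∂μHE[finrank ℝ E - 1] :=
          lintegral_mono fun x => (ENNReal.ofReal_le_ofReal (hhigh x)).trans <| by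
            rw [ENNReal.ofReal_mul' (mul_nonneg (hw0 x) (norm_nonneg _))]
            gcongr
            exact ENNReal.coe_le_coe.2 hC₂
      _ = _ := lintegral_const_mul' _ _ ENNReal.coe_ne_top

lemma exists_comparison_parameter (d : ℕ) {C : ℝ≥0} (hC : 1 < C) :
    ∃ κ : ℝ, 0 < κ ∧ κ < 1 ∧ (1 - κ)⁻¹.toNNReal ^ d ≤ C ∧ ((1 + κ) / (1 - κ)).toNNReal ≤ C := by
  have h₁ : ContinuousAt (fun κ : ℝ => (1 - κ)⁻¹.toNNReal ^ d) 0 :=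
    (continuous_real_toNNReal.continuousAt.comp
      (ContinuousAt.inv₀ (by fun_prop) (by norm_num))).pow d
  have h₂ : ContinuousAt (fun κ : ℝ => ((1 + κ) / (1 - κ)).toNNReal) 0 :=
    continuous_real_toNNReal.continuousAt.comp
      (ContinuousAt.div₀ (by fun_prop) (by fun_prop) (by norm_num))
  have hev := (h₁.eventually_lt_const (by simpa)).and (h₂.eventually_lt_const (by simpa))
  obtain ⟨κ, ⟨hκ₁, hκ₂⟩, hκ0, hκ1⟩ := ((hev.filter_mono
    (nhdsWithin_le_nhds (s := Ioi 0))).and (Ioo_mem_nhdsGT one_pos)).exists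
  exact ⟨κ, hκ0, hκ1, hκ₁.le, hκ₂.le⟩

lemma exists_isOpen_fluxComparable (hφ : ContDiff ℝ 2 φ) {p : E} (hp : ∇ φ p ≠ 0) {C : ℝ≥0}
    (hC : 1 < C) :
    ∃ U, IsOpen U ∧ p ∈ U ∧ ∀ w : E → ℝ, ContDiff ℝ 1 w → HasCompactSupport w → 0 ≤ w →
      tsupport w ⊆ U → FluxComparable C φ w := by
  obtain ⟨κ, hκ0, hκ1, hC₁, hC₂⟩ := exists_comparison_parameter (finrank ℝ E - 1) hC
  have ha : 0 < ‖∇ φ p‖ := norm_pos_iff.2 hp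
  have he : ‖‖∇ φ p‖⁻¹ • ∇ φ p‖ = 1 := norm_smul_inv_norm hp
  obtain ⟨r, hr, hball⟩ := Metric.continuousAt_iff.1
    (contDiff_gradient hφ).continuous.continuousAt (κ * ‖∇ φ p‖) (mul_pos hκ0 ha)
  refine ⟨Metric.ball p r, Metric.isOpen_ball, Metric.mem_ball_self hr, fun w hw hwc hw0 hwB =>
    fluxComparable_of_gradient_near hφ measurableSet_ball (convex_ball p r) ha he hκ1
      (fun x hx => ?_) hw hwc hw0 hwB hC₁ hC₂⟩
  rw [smul_inv_smul₀ ha.ne', ← dist_eq_norm]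
  exact (hball hx).le

lemma fluxComparable_of_gradient_ne_zero (hφ : ContDiff ℝ 2 φ) {C : ℝ≥0} (hC : 1 < C)
    (hw : ContDiff ℝ 1 w) (hwc : HasCompactSupport w) (hw0 : 0 ≤ w)
    (hreg : ∀ x ∈ tsupport w, ∇ φ x ≠ 0) : FluxComparable C φ w := by
  choose U hUo hpU hU using fun p : {p // ∇ φ p ≠ 0} => exists_isOpen_fluxComparable hφ p.2 hC
  obtain ⟨t, ht⟩ := hwc.isCompact.elim_finite_subcover U hUo
    fun x hx => mem_iUnion.2 ⟨⟨x, hreg x hx⟩, hpU ⟨x, hreg x hx⟩⟩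
  obtain ⟨ρ, hρ⟩ := SmoothPartitionOfUnity.exists_isSubordinate (modelWithCornersSelf ℝ E)
    (isClosed_tsupport w) (fun i : t => U i) (fun i => hUo i)
    (ht.trans (iUnion_subtype (· ∈ t) fun i => U i).ge)
  have hsum : w = ∑ i, ⇑(ρ i) * w := by
    ext x
    by_cases hx : x ∈ tsupport w
    · have hone := ρ.sum_eq_one hx
      rw [finsum_eq_sum_of_fintype] at hone
      simp only [Finset.sum_apply, Pi.mul_apply, ← Finset.sum_mul, hone, one_mul]
    · simp [image_eq_zero_of_notMem_tsupport hx]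
  have hsmooth : ∀ i, ContDiff ℝ 1 (⇑(ρ i) * w) := fun i =>
    ((ρ i).contMDiff.contDiff.of_le (mod_cast le_top)).mul hw
  have hnonneg : ∀ i, 0 ≤ ⇑(ρ i) * w := fun i x => mul_nonneg (ρ.nonneg i x) (hw0 x)
  rw [hsum]
  exact fluxComparable_sum hφ (fun i _ => hsmooth i) (fun i _ => hwc.mul_left)
    (fun i _ => hnonneg i) fun i _ => hU i _ (hsmooth i) hwc.mul_left (hnonneg i)
      (tsupport_mul_subset_left.trans (hρ i))

lemma ennreal_le_of_forall_one_lt_le_mul {A B : ℝ≥0∞}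
    (h : ∀ C : ℝ≥0, 1 < C → A ≤ C * B) : A ≤ B := by
  have hlim : Tendsto (fun C : ℝ≥0 => (C : ℝ≥0∞) * B) (𝓝[>] 1) (𝓝 B) := by
    have hcoe : Tendsto (fun C : ℝ≥0 => (C : ℝ≥0∞)) (𝓝[>] 1) (𝓝 1) :=
      ENNReal.tendsto_coe.2 (tendsto_id'.2 nhdsWithin_le_nhds)
    simpa using ENNReal.Tendsto.mul_const hcoe (b := B) (.inl one_ne_zero)
  exact ge_of_tendsto hlim (eventually_mem_nhdsWithin.mono h)

theorem lintegral_nodalMeasure_of_gradient_ne_zero (hφ : ContDiff ℝ 2 φ) (hw : ContDiff ℝ 1 w)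
    (hwc : HasCompactSupport w) (hw0 : 0 ≤ w) (hreg : ∀ x ∈ tsupport w, ∇ φ x ≠ 0) :
    ∫⁻ x, ENNReal.ofReal (w x) ∂nodalMeasure φ = ENNReal.ofReal (flux φ (w • ∇ φ)) := by
  have hcomp := fun (C : ℝ≥0) (hC : 1 < C) =>
    fluxComparable_of_gradient_ne_zero hφ hC hw hwc hw0 hreg
  exact le_antisymm (ennreal_le_of_forall_one_lt_le_mul fun C hC => (hcomp C hC).2.1)
    (ennreal_le_of_forall_one_lt_le_mul fun C hC => (hcomp C hC).2.2)

lemma flux_smul_gradient_nonneg_of_gradient_ne_zero (hφ : ContDiff ℝ 2 φ) (hw : ContDiff ℝ 1 w)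
    (hwc : HasCompactSupport w) (hw0 : 0 ≤ w) (hreg : ∀ x ∈ tsupport w, ∇ φ x ≠ 0) :
    0 ≤ flux φ (w • ∇ φ) :=
  (fluxComparable_of_gradient_ne_zero hφ one_lt_two hw hwc hw0 hreg).1

end FluxComparison

section CutoffIntegrals

variable {α : Type*} [MeasurableSpace α] {μ : Measure α} {q g r : α → ℝ}

lemma integrable_positiveCutoff_mul (hq : Measurable q) (hg : Integrable g μ) (k : ℕ) :
    Integrable (fun x => positiveCutoff k (q x) * g x) μ := by
  refine hg.norm.mono' (((contDiff_positiveCutoff k).continuous.measurable.comp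
    hq).aestronglyMeasurable.mul hg.aestronglyMeasurable) (.of_forall fun x => ?_)
  rw [norm_mul, Real.norm_of_nonneg (positiveCutoff_nonneg k _)]
  exact mul_le_of_le_one_left (norm_nonneg _) (positiveCutoff_le_one k _)

lemma abs_deriv_positiveCutoff_mul_le {a b c : ℝ} (h : |b| ≤ |a| * c) (k : ℕ) :
    |deriv (positiveCutoff k) a * b| ≤ |a * deriv (positiveCutoff k) a| * c := by
  rw [abs_mul, abs_mul, mul_comm |a|, mul_assoc]
  gcongr

lemma exists_abs_deriv_positiveCutoff_mul_le :
    ∃ C, ∀ (k : ℕ) {a b c : ℝ}, |b| ≤ |a| * c → |deriv (positiveCutoff k) a * b| ≤ C * |c| := by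
  obtain ⟨C, hC⟩ := exists_abs_mul_deriv_positiveCutoff_le
  refine ⟨C, fun k a b c h => (abs_deriv_positiveCutoff_mul_le h k).trans ?_⟩
  calc |a * deriv (positiveCutoff k) a| * c ≤ |a * deriv (positiveCutoff k) a| * |c| := by
        gcongr; exact le_abs_self c
    _ ≤ C * |c| := by gcongr; exact hC k a

lemma aestronglyMeasurable_deriv_positiveCutoff_mul (hq : Measurable q) (hg : Measurable g)
    (k : ℕ) : AEStronglyMeasurable (fun x => deriv (positiveCutoff k) (q x) * g x) μ :=
  (((contDiff_positiveCutoff k).continuous_deriv_one.measurable.comp hq).mul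
    hg).aestronglyMeasurable

lemma integrable_deriv_positiveCutoff_mul (hq : Measurable q) (hg : Measurable g)
    (hr : Integrable r μ) (hgr : ∀ x, |g x| ≤ |q x| * r x) (k : ℕ) :
    Integrable (fun x => deriv (positiveCutoff k) (q x) * g x) μ := by
  obtain ⟨C, hC⟩ := exists_abs_deriv_positiveCutoff_mul_le
  exact (hr.abs.const_mul C).mono' (aestronglyMeasurable_deriv_positiveCutoff_mul hq hg k)
    (.of_forall fun x => hC k (hgr x))

lemma tendsto_integral_deriv_positiveCutoff_mul (hq : Measurable q) (hg : Measurable g)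
    (hr : Integrable r μ) (hgr : ∀ x, |g x| ≤ |q x| * r x) :
    Tendsto (fun k => ∫ x, deriv (positiveCutoff k) (q x) * g x ∂μ) atTop (𝓝 0) := by
  obtain ⟨C, hC⟩ := exists_abs_deriv_positiveCutoff_mul_le
  rw [← integral_zero α ℝ (μ := μ)]
  refine tendsto_integral_of_dominated_convergence (fun x => C * |r x|)
    (aestronglyMeasurable_deriv_positiveCutoff_mul hq hg) (hr.abs.const_mul C)
    (fun k => .of_forall fun x => hC k (hgr x))
    (.of_forall fun x => squeeze_zero_norm (abs_deriv_positiveCutoff_mul_le (hgr x)) ?_)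
  simpa using (tendsto_mul_deriv_positiveCutoff (q x)).abs.mul_const (r x)

end CutoffIntegrals

section CriticalPoints

variable {E : Type*} [NormedAddCommGroup E] [InnerProductSpace ℝ E] [FiniteDimensional ℝ E]
  {φ w q r : E → ℝ} {X : E → E}

lemma divergence_positiveCutoff_smul (hq : ContDiff ℝ 1 q) (hX : ContDiff ℝ 1 X) (k : ℕ) (x : E) :
    divergence ((positiveCutoff k ∘ q) • X) x =
      positiveCutoff k (q x) * divergence X x +
        deriv (positiveCutoff k) (q x) * fderiv ℝ q x (X x) := by
  have hchain : HasFDerivAt (positiveCutoff k ∘ q)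
      (deriv (positiveCutoff k) (q x) • fderiv ℝ q x) x :=
    (((contDiff_positiveCutoff k).differentiable one_ne_zero _).hasDerivAt).comp_hasFDerivAt x
      (hq.differentiable one_ne_zero x).hasFDerivAt
  rw [divergence_smul hchain.differentiableAt (hX.differentiable one_ne_zero x), hchain.fderiv]
  rfl

lemma gradient_ne_zero_of_mem_tsupport_positiveCutoff_mul (hφ : ContDiff ℝ 1 φ) (w : E → ℝ) (k : ℕ)
    {x : E} (hx : x ∈ tsupport ((fun x => positiveCutoff k (‖∇ φ x‖ ^ 2)) * w)) : ∇ φ x ≠ 0 := by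
  have hclosed : IsClosed {x | 1 ≤ k * ‖∇ φ x‖ ^ 2} :=
    isClosed_le continuous_const (continuous_const.mul ((continuous_gradient hφ).norm.pow 2))
  have hsub : tsupport ((fun x => positiveCutoff k (‖∇ φ x‖ ^ 2)) * w) ⊆
      {x | 1 ≤ k * ‖∇ φ x‖ ^ 2} := by
    refine closure_minimal (fun y hy => ?_) hclosed
    contrapose! hy
    simp [positiveCutoff_of_mul_le (not_le.1 hy).le]
  intro hcrit
  have hone : 1 ≤ k * ‖∇ φ x‖ ^ 2 := hsub hx
  rw [hcrit, norm_zero, zero_pow two_ne_zero, mul_zero] at hone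
  exact hone.not_gt one_pos

lemma abs_fderiv_norm_sq_gradient_le (hφ : ContDiff ℝ 2 φ) (w : E → ℝ) (x : E) :
    |fderiv ℝ (fun y => ‖∇ φ y‖ ^ 2) x ((w • ∇ φ) x)| ≤
      |‖∇ φ x‖ ^ 2| * (2 * ‖w x‖ * ‖fderiv ℝ (∇ φ) x‖) := by
  have hderiv := (((contDiff_gradient hφ).differentiable one_ne_zero x).hasFDerivAt.norm_sq).fderiv
  have hinner : fderiv ℝ (fun y => ‖∇ φ y‖ ^ 2) x ((w • ∇ φ) x) =
      2 * (w x * inner ℝ (∇ φ x) (fderiv ℝ (∇ φ) x (∇ φ x))) := by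
    rw [hderiv]
    simpa using mul_left_comm _ _ _
  have hcs : |inner ℝ (∇ φ x) (fderiv ℝ (∇ φ) x (∇ φ x))| ≤
      ‖∇ φ x‖ * (‖fderiv ℝ (∇ φ) x‖ * ‖∇ φ x‖) :=
    (abs_real_inner_le_norm _ _).trans (by gcongr; exact ContinuousLinearMap.le_opNorm _ _)
  rw [hinner, abs_mul, abs_mul, abs_two, abs_of_nonneg (sq_nonneg ‖∇ φ x‖), Real.norm_eq_abs]
  nlinarith [mul_le_mul_of_nonneg_left hcs (abs_nonneg (w x))]

variable [MeasurableSpace E] [BorelSpace E]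

lemma ae_fderiv_eq_zero_of_eq_zero (hX : Differentiable ℝ X) :
    ∀ᵐ x, X x = 0 → fderiv ℝ X x = 0 := by
  have hzero : MeasurableSet {x | X x = 0} :=
    (isClosed_eq hX.continuous continuous_const).measurableSet
  have happrox : ApproximatesLinearOn X (0 : E →L[ℝ] E) {x | X x = 0} 0 :=
    fun x hx y hy => by simp [mem_ofPred_eq ▸ hx, mem_ofPred_eq ▸ hy]
  have hae := happrox.norm_fderiv_sub_le volume hzero (fderiv ℝ X) fun x _ =>
    (hX x).hasFDerivAt.hasFDerivWithinAt
  filter_upwards [(ae_restrict_iff' hzero).1 hae] with x hx hXx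
  simpa using hx hXx

lemma ae_divergence_smul_gradient_eq_zero (hφ : ContDiff ℝ 2 φ) (hw : Differentiable ℝ w) :
    ∀ᵐ x, ∇ φ x = 0 → divergence (w • ∇ φ) x = 0 := by
  have hgrad : Differentiable ℝ (∇ φ) := (contDiff_gradient hφ).differentiable one_ne_zero
  filter_upwards [ae_fderiv_eq_zero_of_eq_zero hgrad] with x hx hcrit
  rw [divergence_smul (hw x) (hgrad x), divergence, hx hcrit, hcrit]
  simp

/-- The bound `|dq(X)| ≤ |q| r` offsets the growth of the derivatives of the cutoffs. -/
lemma tendsto_flux_positiveCutoff_smul (hq : ContDiff ℝ 1 q) (hX : ContDiff ℝ 1 X)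
    (hXc : HasCompactSupport X) (hr : Integrable r)
    (hqX : ∀ x, |fderiv ℝ q x (X x)| ≤ |q x| * r x)
    (hdiv : ∀ᵐ x, q x ≤ 0 → divergence X x = 0) (φ : E → ℝ) :
    Tendsto (fun k => flux φ ((positiveCutoff k ∘ q) • X)) atTop (𝓝 (flux φ X)) := by
  have hdivX : IntegrableOn (divergence X) {x | 0 < φ x} :=
    (integrable_divergence hX hXc).integrableOn
  have hdq : Measurable fun x => fderiv ℝ q x (X x) :=
    ((hq.continuous_fderiv one_ne_zero).clm_apply hX.continuous).measurable
  have hset : ∫ x in {x | 0 < q x}, divergence X x ∂volume.restrict {x | 0 < φ x} =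
      ∫ x in {x | 0 < φ x}, divergence X x :=
    setIntegral_eq_integral_of_ae_compl_eq_zero
      ((ae_restrict_of_ae hdiv).mono fun x hx hqx => hx (not_lt.1 hqx))
  have hlim := (tendsto_integral_positiveCutoff_mul hq.continuous.measurable hdivX).add
    (tendsto_integral_deriv_positiveCutoff_mul hq.continuous.measurable hdq
      (hr.integrableOn (s := {x | 0 < φ x})) hqX)
  rw [hset, add_zero] at hlim
  refine hlim.neg.congr fun k => ?_
  simp only [flux, divergence_positiveCutoff_smul hq hX]
  rw [integral_add (integrable_positiveCutoff_mul hq.continuous.measurable hdivX k)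
    (integrable_deriv_positiveCutoff_mul hq.continuous.measurable hdq hr.integrableOn hqX k)]

lemma tendsto_flux_positiveCutoff_smul_gradient (hφ : ContDiff ℝ 2 φ) (hw : ContDiff ℝ 1 w)
    (hwc : HasCompactSupport w) :
    Tendsto (fun k => flux φ (((fun x => positiveCutoff k (‖∇ φ x‖ ^ 2)) * w) • ∇ φ)) atTop
      (𝓝 (flux φ (w • ∇ φ))) := by
  have hgrad := contDiff_gradient hφ
  have hr : Integrable fun x => 2 * ‖w x‖ * ‖fderiv ℝ (∇ φ) x‖ :=
    ((continuous_const.mul hw.continuous.norm).mul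
      (hgrad.continuous_fderiv one_ne_zero).norm).integrable_of_hasCompactSupport
        hwc.norm.mul_left.mul_right
  have hdiv : ∀ᵐ x, ‖∇ φ x‖ ^ 2 ≤ 0 → divergence (w • ∇ φ) x = 0 :=
    (ae_divergence_smul_gradient_eq_zero hφ (hw.differentiable one_ne_zero)).mono fun x hx hq =>
      hx (norm_eq_zero.1 (pow_eq_zero_iff two_ne_zero |>.1 (hq.antisymm (sq_nonneg _))))
  simp only [mul_smul]
  exact tendsto_flux_positiveCutoff_smul (hgrad.norm_sq ℝ) (hw.smul hgrad) hwc.smul_right hr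
    (abs_fderiv_norm_sq_gradient_le hφ w) hdiv φ

lemma tendsto_lintegral_nodalMeasure_positiveCutoff_mul (hφ : ContDiff ℝ 1 φ) (hw : Continuous w)
    (hw0 : 0 ≤ w) :
    Tendsto (fun k => ∫⁻ x, ENNReal.ofReal (((fun x => positiveCutoff k (‖∇ φ x‖ ^ 2)) * w) x)
      ∂nodalMeasure φ) atTop (𝓝 (∫⁻ x, ENNReal.ofReal (w x) ∂nodalMeasure φ)) := by
  have hcut : ∀ k, Continuous ((fun x => positiveCutoff k (‖∇ φ x‖ ^ 2)) * w) := fun k =>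
    ((contDiff_positiveCutoff k).continuous.comp ((continuous_gradient hφ).norm.pow 2)).mul hw
  rw [lintegral_nodalMeasure_eq_setLIntegral hφ hw]
  simp only [lintegral_nodalMeasure_eq_setLIntegral hφ (hcut _)]
  refine lintegral_tendsto_of_tendsto_of_monotone (fun k => ?_) (.of_forall fun x => ?_)
    (.of_forall fun x => ?_)
  · exact ((hcut k).mul (continuous_gradient hφ).norm).measurable.ennreal_ofReal.aemeasurable
  · intro k l hkl
    refine ENNReal.ofReal_le_ofReal (mul_le_mul_of_nonneg_right
      (mul_le_mul_of_nonneg_right (positiveCutoff_mono (sq_nonneg _) hkl) (hw0 x)) (norm_nonneg _))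
  · refine ENNReal.tendsto_ofReal ?_
    by_cases hcrit : ∇ φ x = 0
    · simp [hcrit]
    · have hpos : 0 < ‖∇ φ x‖ ^ 2 := by positivity
      have hlim := ((tendsto_positiveCutoff (‖∇ φ x‖ ^ 2)).mul_const (w x)).mul_const ‖∇ φ x‖
      rwa [indicator_of_mem (mem_Ioi.2 hpos), Pi.one_apply, one_mul] at hlim

/-- No structure of the critical set is needed: critical points carry neither nodal measure nor,
almost everywhere, divergence. -/
theorem lintegral_nodalMeasure (hφ : ContDiff ℝ 2 φ) (hw : ContDiff ℝ 1 w)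
    (hwc : HasCompactSupport w) (hw0 : 0 ≤ w) :
    0 ≤ flux φ (w • ∇ φ) ∧
      ∫⁻ x, ENNReal.ofReal (w x) ∂nodalMeasure φ = ENNReal.ofReal (flux φ (w • ∇ φ)) := by
  have hφ1 : ContDiff ℝ 1 φ := hφ.of_le one_le_two
  have hcut : ∀ k, ContDiff ℝ 1 ((fun x => positiveCutoff k (‖∇ φ x‖ ^ 2)) * w) := fun k =>
    ((contDiff_positiveCutoff k).comp ((contDiff_gradient hφ).norm_sq ℝ)).mul hw
  have hcutc : ∀ k, HasCompactSupport ((fun x => positiveCutoff k (‖∇ φ x‖ ^ 2)) * w) :=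
    fun k => hwc.mul_left
  have hcut0 : ∀ k, 0 ≤ (fun x => positiveCutoff k (‖∇ φ x‖ ^ 2)) * w := fun k x =>
    mul_nonneg (positiveCutoff_nonneg _ _) (hw0 x)
  have hreg := fun k x => gradient_ne_zero_of_mem_tsupport_positiveCutoff_mul hφ1 w k (x := x)
  have hflux := tendsto_flux_positiveCutoff_smul_gradient hφ hw hwc
  refine ⟨ge_of_tendsto' hflux fun k =>
    flux_smul_gradient_nonneg_of_gradient_ne_zero hφ (hcut k) (hcutc k) (hcut0 k) (hreg k), ?_⟩
  refine tendsto_nhds_unique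
    (tendsto_lintegral_nodalMeasure_positiveCutoff_mul hφ1 hw.continuous hw0) ?_
  exact (ENNReal.tendsto_ofReal hflux).congr fun k =>
    (lintegral_nodalMeasure_of_gradient_ne_zero hφ (hcut k) (hcutc k) (hcut0 k) (hreg k)).symm

end CriticalPoints

section FluxFormula

variable {E : Type*} [NormedAddCommGroup E] [InnerProductSpace ℝ E] [FiniteDimensional ℝ E]
  {φ w : E → ℝ}

lemma exists_hasCompactSupport_norm_le (hw : Continuous w) (hwc : HasCompactSupport w) :
    ∃ v : E → ℝ, ContDiff ℝ 1 v ∧ HasCompactSupport v ∧ ∀ x, ‖w x‖ ≤ v x := by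
  obtain ⟨M, hM⟩ := hwc.exists_bound_of_continuous hw
  obtain ⟨R, hR, hwR⟩ := hwc.isBounded.subset_closedBall_lt 0 (0 : E)
  let η : ContDiffBump (0 : E) := ⟨R, R + 1, hR, lt_add_one R⟩
  refine ⟨fun x => M * η x, contDiff_const.mul η.contDiff, η.hasCompactSupport.mul_left,
    fun x => ?_⟩
  change ‖w x‖ ≤ M * η x
  by_cases hx : x ∈ tsupport w
  · rw [η.one_of_mem_closedBall (hwR hx), mul_one]
    exact hM x
  · rw [image_eq_zero_of_notMem_tsupport hx, norm_zero]
    exact mul_nonneg ((norm_nonneg _).trans (hM x)) η.nonneg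

variable [MeasurableSpace E] [BorelSpace E]

lemma integrable_nodalMeasure_of_nonneg (hφ : ContDiff ℝ 2 φ) (hw : ContDiff ℝ 1 w)
    (hwc : HasCompactSupport w) (hw0 : 0 ≤ w) : Integrable w (nodalMeasure φ) := by
  refine ⟨hw.continuous.measurable.aestronglyMeasurable, ?_⟩
  rw [hasFiniteIntegral_iff_ofReal (.of_forall hw0), (lintegral_nodalMeasure hφ hw hwc hw0).2]
  exact ENNReal.ofReal_lt_top

lemma integral_nodalMeasure_of_nonneg (hφ : ContDiff ℝ 2 φ) (hw : ContDiff ℝ 1 w)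
    (hwc : HasCompactSupport w) (hw0 : 0 ≤ w) :
    ∫ x, w x ∂nodalMeasure φ = flux φ (w • ∇ φ) := by
  obtain ⟨hflux, hlint⟩ := lintegral_nodalMeasure hφ hw hwc hw0
  rw [integral_eq_lintegral_of_nonneg_ae (.of_forall hw0)
    hw.continuous.measurable.aestronglyMeasurable, hlint, ENNReal.toReal_ofReal hflux]

theorem integrable_nodalMeasure (hφ : ContDiff ℝ 2 φ) (hw : Continuous w)
    (hwc : HasCompactSupport w) : Integrable w (nodalMeasure φ) := by
  obtain ⟨v, hv, hvc, hwv⟩ := exists_hasCompactSupport_norm_le hw hwc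
  exact (integrable_nodalMeasure_of_nonneg hφ hv hvc fun x =>
    (norm_nonneg _).trans (hwv x)).mono' hw.measurable.aestronglyMeasurable (.of_forall hwv)

theorem integral_nodalMeasure_eq_flux (hφ : ContDiff ℝ 2 φ) (hw : ContDiff ℝ 1 w)
    (hwc : HasCompactSupport w) : ∫ x, w x ∂nodalMeasure φ = flux φ (w • ∇ φ) := by
  have hgrad := contDiff_gradient hφ
  obtain ⟨v, hv, hvc, hwv⟩ := exists_hasCompactSupport_norm_le hw.continuous hwc
  have hsum := integral_nodalMeasure_of_nonneg (w := w + v) hφ (hw.add hv) (hwc.add hvc) fun x =>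
    neg_le_iff_add_nonneg.1 (abs_le.1 (hwv x)).1
  have hv0 := integral_nodalMeasure_of_nonneg hφ hv hvc fun x => (norm_nonneg _).trans (hwv x)
  rw [integral_add' (integrable_nodalMeasure hφ hw.continuous hwc)
    (integrable_nodalMeasure hφ hv.continuous hvc), hv0, add_smul,
    flux_add (hw.smul hgrad) hwc.smul_right (hv.smul hgrad) hvc.smul_right] at hsum
  exact add_right_cancel hsum

lemma integral_nodalMeasure_eq_setIntegral (hφ : ContDiff ℝ 1 φ) (w : E → ℝ) :
    ∫ x, w x ∂nodalMeasure φ = ∫ x in {x | φ x = 0}, w x * ‖∇ φ x‖ ∂μHE[finrank ℝ E - 1] := by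
  rw [nodalMeasure, integral_withDensity_eq_integral_toReal_smul₀
    (continuous_gradient hφ).enorm.measurable.aemeasurable (.of_forall fun x => enorm_lt_top)]
  simp [mul_comm]

lemma integrable_nodalMeasure_iff (hφ : ContDiff ℝ 1 φ) :
    Integrable w (nodalMeasure φ) ↔
      IntegrableOn (fun x => w x * ‖∇ φ x‖) {x | φ x = 0} μHE[finrank ℝ E - 1] := by
  rw [nodalMeasure, integrable_withDensity_iff_integrable_smul₀'
    (continuous_gradient hφ).enorm.measurable.aemeasurable (.of_forall fun x => enorm_lt_top),
    IntegrableOn]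
  simp [mul_comm]

end FluxFormula

section Lattice

variable {n : ℕ} {x : EuclideanSpace ℝ (Fin n)} {k : Fin n → ℤ}

/-- The point of `ℤⁿ ⊆ ℝⁿ` with coordinates `k`. -/
def latticeVec (k : Fin n → ℤ) : EuclideanSpace ℝ (Fin n) :=
  (WithLp.equiv 2 (Fin n → ℝ)).symm fun i => (k i : ℝ)

@[simp] lemma latticeVec_apply (k : Fin n → ℤ) (i : Fin n) : latticeVec k i = k i := rfl

/-- The index of the translate of `Q` that contains `x`. -/
def latticeFloor (x : EuclideanSpace ℝ (Fin n)) (i : Fin n) : ℤ := ⌊x i⌋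

lemma measurable_latticeFloor : Measurable (latticeFloor (n := n)) :=
  measurable_pi_lambda _ fun i => Int.measurable_floor.comp (by fun_prop)

lemma latticeFloor_add_latticeVec_eq_iff : latticeFloor (x + latticeVec k) = k ↔ x ∈ Qcube n := by
  simp [funext_iff, latticeFloor, Qcube, Int.floor_eq_zero_iff]

lemma measurableSet_Qcube : MeasurableSet (Qcube n) := by
  simp_rw [Qcube, ofPred_forall]
  exact .iInter fun i => measurableSet_Ico.preimage (by fun_prop)

variable {μ : Measure (EuclideanSpace ℝ (Fin n))} {g : EuclideanSpace ℝ (Fin n) → ℝ}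

lemma integral_eq_setIntegral_Qcube_sum
    (hμ : ∀ k, MeasurePreserving (fun x => x + latticeVec k) μ μ) (hg : Integrable g μ)
    {s : Finset (Fin n → ℤ)} (hs : ∀ x, g x ≠ 0 → latticeFloor x ∈ s) :
    ∫ x, g x ∂μ = ∫ x in Qcube n, ∑ k ∈ s, g (x + latticeVec k) ∂μ := by
  have htile : ∀ k : Fin n → ℤ, MeasurableSet (latticeFloor ⁻¹' {k}) := fun k =>
    measurable_latticeFloor (measurableSet_singleton k)
  have hdisj : (s : Set (Fin n → ℤ)).PairwiseDisjoint fun k => latticeFloor ⁻¹' {k} :=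
    fun k _ l _ hkl => (disjoint_singleton.2 hkl).preimage _
  have hzero : ∀ x, x ∉ ⋃ k ∈ s, latticeFloor ⁻¹' {k} → g x = 0 := fun x hx => by
    contrapose! hx
    simpa using hs x hx
  have hemb : ∀ k, MeasurableEmbedding fun x : EuclideanSpace ℝ (Fin n) => x + latticeVec k :=
    fun k => measurableEmbedding_addRight _
  have htranslate : ∀ k, Integrable (fun x => g (x + latticeVec k)) μ :=
    fun k => ((hμ k).integrable_comp_emb (hemb k)).2 hg
  have hcube : ∀ k, (fun x => x + latticeVec k) ⁻¹' (latticeFloor ⁻¹' {k}) = Qcube n :=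
    fun k => Set.ext fun x => latticeFloor_add_latticeVec_eq_iff
  rw [← setIntegral_eq_integral_of_forall_compl_eq_zero hzero,
    integral_biUnion_finset _ (fun k _ => htile k) hdisj fun k _ => hg.integrableOn,
    integral_finsetSum s fun k _ => (htranslate k).integrableOn]
  refine Finset.sum_congr rfl fun k _ => ?_
  rw [← (hμ k).setIntegral_preimage_emb (hemb k), hcube k]

lemma measurePreserving_restrict_add_latticeVec
    (hμ : ∀ k, MeasurePreserving (fun x => x + latticeVec k) μ μ)
    {φ : EuclideanSpace ℝ (Fin n) → ℝ} (hφ : ZPeriodic φ) (hφm : Measurable φ) {t : Set ℝ}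
    (ht : MeasurableSet t) (k : Fin n → ℤ) :
    MeasurePreserving (fun x => x + latticeVec k) (μ.restrict (φ ⁻¹' t))
      (μ.restrict (φ ⁻¹' t)) := by
  have hpre : (fun x => x + latticeVec k) ⁻¹' (φ ⁻¹' t) = φ ⁻¹' t := by
    ext x
    exact iff_of_eq (congrArg (· ∈ t) (hφ x k))
  simpa only [hpre] using (hμ k).restrict_preimage (hφm ht)

end Lattice

section LatticeCutoff

/-- A smooth bump supported in `[-1, 1]` whose integer translates telescope to `1`. -/
def bump (t : ℝ) : ℝ := smoothTransition (t + 1) - smoothTransition t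

lemma contDiff_bump : ContDiff ℝ 1 bump :=
  (smoothTransition.contDiff.comp (contDiff_id.add contDiff_const)).sub smoothTransition.contDiff

lemma support_bump_subset : Function.support bump ⊆ Icc (-1) 1 := by
  intro t ht
  contrapose! ht
  rcases not_and_or.1 ht with h | h
  · rw [Function.notMem_support, bump, smoothTransition.zero_of_nonpos (by linarith),
      smoothTransition.zero_of_nonpos (by linarith), sub_zero]
  · rw [Function.notMem_support, bump, smoothTransition.one_of_one_le (by linarith),
      smoothTransition.one_of_one_le (by linarith), sub_self]

lemma sum_bump {t : ℝ} (ht : t ∈ Ioo (-1 : ℝ) 2) :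
    ∑ j ∈ Finset.Icc (-2 : ℤ) 1, bump (t + j) = 1 := by
  have hleft : smoothTransition (t + 2) = 1 :=
    smoothTransition.one_of_one_le (by linarith [ht.1])
  have hright : smoothTransition (t - 2) = 0 :=
    smoothTransition.zero_of_nonpos (by linarith [ht.2])
  have htelescope : ∑ j ∈ Finset.Icc (-2 : ℤ) 1, bump (t + j) =
      smoothTransition (t + 2) - smoothTransition (t - 2) := by
    have hIcc : Finset.Icc (-2 : ℤ) 1 = {-2, -1, 0, 1} := by decide
    rw [hIcc, Finset.sum_insert (by decide), Finset.sum_insert (by decide),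
      Finset.sum_insert (by decide), Finset.sum_singleton]
    simp only [bump]
    push_cast
    ring_nf
  rw [htelescope, hleft, hright, sub_zero]

variable {n : ℕ} {x : EuclideanSpace ℝ (Fin n)}

/-- A smooth compactly supported function on `ℝⁿ` whose lattice translates sum to `1`. -/
def latticeCutoff (x : EuclideanSpace ℝ (Fin n)) : ℝ := ∏ i, bump (x i)

/-- The lattice points whose translates of `Q` cover the support of `latticeCutoff`. -/
def cutoffTiles (n : ℕ) : Finset (Fin n → ℤ) := Fintype.piFinset fun _ => Finset.Icc (-2) 1

lemma contDiff_latticeCutoff : ContDiff ℝ 1 (latticeCutoff (n := n)) :=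
  contDiff_prod fun i _ => contDiff_bump.comp (contDiff_piLp_apply (i := i) 2)

lemma tsupport_latticeCutoff_subset :
    tsupport (latticeCutoff (n := n)) ⊆ {x | ∀ i, x i ∈ Icc (-1 : ℝ) 1} := by
  refine closure_minimal (fun x hx i => support_bump_subset ?_) ?_
  · exact Finset.prod_ne_zero_iff.1 hx i (Finset.mem_univ i)
  · rw [ofPred_forall]
    exact isClosed_iInter fun i => isClosed_Icc.preimage (by fun_prop)

lemma hasCompactSupport_latticeCutoff : HasCompactSupport (latticeCutoff (n := n)) := by
  have hbox : IsCompact {x : EuclideanSpace ℝ (Fin n) | ∀ i, x i ∈ Icc (-1 : ℝ) 1} := by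
    simpa [Set.pi] using (EuclideanSpace.equiv (Fin n) ℝ).toHomeomorph.isCompact_preimage.2
      (isCompact_univ_pi fun _ => isCompact_Icc (a := (-1 : ℝ)) (b := 1))
  exact hbox.of_isClosed_subset (isClosed_tsupport _) tsupport_latticeCutoff_subset

lemma latticeFloor_mem_cutoffTiles (hx : x ∈ tsupport latticeCutoff) :
    latticeFloor x ∈ cutoffTiles n := by
  refine Fintype.mem_piFinset.2 fun i => Finset.mem_Icc.2 ?_
  obtain ⟨hleft, hright⟩ := tsupport_latticeCutoff_subset hx i
  constructor
  · refine Int.le_floor.2 ?_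
    push_cast
    linarith
  · have hfloor : (⌊x i⌋ : ℝ) ≤ 1 := (Int.floor_le (x i)).trans hright
    exact_mod_cast hfloor

lemma sum_latticeCutoff_add (hx : ∀ i, x i ∈ Ioo (-1 : ℝ) 2) :
    ∑ k ∈ cutoffTiles n, latticeCutoff (x + latticeVec k) = 1 := by
  simp only [cutoffTiles, latticeCutoff, PiLp.add_apply, latticeVec_apply]
  rw [← Finset.prod_univ_sum (fun _ => Finset.Icc (-2 : ℤ) 1) fun i j => bump (x i + j)]
  exact Finset.prod_eq_one fun i _ => sum_bump (hx i)

lemma sum_latticeCutoff_eventuallyEq_one (hx : x ∈ Qcube n) :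
    (fun y => ∑ k ∈ cutoffTiles n, latticeCutoff (y + latticeVec k)) =ᶠ[𝓝 x] 1 := by
  have hopen : IsOpen {y : EuclideanSpace ℝ (Fin n) | ∀ i, y i ∈ Ioo (-1 : ℝ) 2} := by
    rw [ofPred_forall]
    exact isOpen_iInter_of_finite fun i => isOpen_Ioo.preimage (by fun_prop)
  filter_upwards [hopen.mem_nhds fun i => ⟨by linarith [(hx i).1], by linarith [(hx i).2]⟩]
    with y hy using sum_latticeCutoff_add hy

lemma sum_fderiv_latticeCutoff_add (hx : x ∈ Qcube n) :
    ∑ k ∈ cutoffTiles n, fderiv ℝ latticeCutoff (x + latticeVec k) = 0 := by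
  have hdiff : ∀ k : Fin n → ℤ, DifferentiableAt ℝ (fun y => latticeCutoff (y + latticeVec k)) x :=
    fun k => (contDiff_latticeCutoff.comp (contDiff_id.add contDiff_const)).differentiable
      one_ne_zero x
  have hsum := (sum_latticeCutoff_eventuallyEq_one hx).fderiv_eq (𝕜 := ℝ)
  rw [fderiv_fun_sum fun k _ => hdiff k] at hsum
  simpa [fderiv_comp_add_right] using hsum

end LatticeCutoff

section GreenIdentity

variable {E : Type*} [NormedAddCommGroup E] [InnerProductSpace ℝ E] [FiniteDimensional ℝ E]
  {φ ψ χ : E → ℝ}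

lemma contDiff_smul_gradient_sub_smul_gradient (hφ : ContDiff ℝ 2 φ) (hψ : ContDiff ℝ 2 ψ) :
    ContDiff ℝ 1 (ψ • ∇ φ - φ • ∇ ψ) :=
  ((hψ.of_le one_le_two).smul (contDiff_gradient hφ)).sub
    ((hφ.of_le one_le_two).smul (contDiff_gradient hψ))

lemma divergence_smul_gradient_sub_smul_gradient (hφ : ContDiff ℝ 2 φ) (hψ : ContDiff ℝ 2 ψ)
    (x : E) : divergence (ψ • ∇ φ - φ • ∇ ψ) x =
      ψ x * divergence (∇ φ) x - φ x * divergence (∇ ψ) x := by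
  have hφx := hφ.differentiable two_ne_zero x
  have hψx := hψ.differentiable two_ne_zero x
  have hgradφ := (contDiff_gradient hφ).differentiable one_ne_zero x
  have hgradψ := (contDiff_gradient hψ).differentiable one_ne_zero x
  rw [divergence_sub (hψx.smul hgradφ) (hφx.smul hgradψ), divergence_smul hψx hgradφ,
    divergence_smul hφx hgradψ, ← inner_gradient_left, ← inner_gradient_left, real_inner_comm]
  ring

variable [MeasurableSpace E] [BorelSpace E]

lemma flux_mul_smul_gradient (hφ : ContDiff ℝ 2 φ) (hψ : ContDiff ℝ 2 ψ) (hχ : ContDiff ℝ 1 χ)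
    (hχc : HasCompactSupport χ) :
    flux φ ((χ * ψ) • ∇ φ) = flux φ (χ • (ψ • ∇ φ - φ • ∇ ψ)) := by
  have hφ1 : ContDiff ℝ 1 φ := hφ.of_le one_le_two
  have htangent : flux φ (χ • φ • ∇ ψ) = 0 := by
    refine flux_eq_zero_of_fderiv_apply_eq_mul (g := fun x => χ x * fderiv ℝ φ x (∇ ψ x)) hφ1
      (hχ.smul (hφ1.smul (contDiff_gradient hψ))) hχc.smul_right ?_ fun x => ?_
    · exact (hχ.continuous.mul ((hφ1.continuous_fderiv one_ne_zero).clm_apply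
        (contDiff_gradient hψ).continuous)).integrable_of_hasCompactSupport hχc.mul_right
    · simp only [Pi.smul_apply', map_smul, smul_eq_mul]
      ring
  have hsplit : (χ * ψ) • ∇ φ = χ • (ψ • ∇ φ - φ • ∇ ψ) + χ • φ • ∇ ψ := by
    rw [← smul_add, sub_add_cancel, mul_smul]
  rw [hsplit, flux_add (hχ.smul (contDiff_smul_gradient_sub_smul_gradient hφ hψ)) hχc.smul_right
    (hχ.smul (hφ1.smul (contDiff_gradient hψ))) hχc.smul_right, htangent, add_zero]

end GreenIdentity

section Periodic

variable {n : ℕ} {φ ψ f : EuclideanSpace ℝ (Fin n) → ℝ}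
  {X : EuclideanSpace ℝ (Fin n) → EuclideanSpace ℝ (Fin n)}

lemma lap_eq_divergence_gradient (hφ : ContDiff ℝ 2 φ) (x : EuclideanSpace ℝ (Fin n)) :
    lap φ x = divergence (∇ φ) x := by
  rw [divergence_eq_sum (EuclideanSpace.basisFun (Fin n) ℝ).toBasis
    ((contDiff_gradient hφ).differentiable one_ne_zero x)]
  simp [lap, ← inner_gradient_left, EuclideanSpace.inner_single_right]

lemma ZPeriodic.apply_add_latticeVec (hφ : ZPeriodic φ) (x : EuclideanSpace ℝ (Fin n))
    (k : Fin n → ℤ) : φ (x + latticeVec k) = φ x := hφ x k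

lemma ZPeriodic.gradient_add_latticeVec (hφ : ZPeriodic φ) (x : EuclideanSpace ℝ (Fin n))
    (k : Fin n → ℤ) : ∇ φ (x + latticeVec k) = ∇ φ x := by
  rw [gradient, ← fderiv_comp_add_right, funext fun y => hφ.apply_add_latticeVec y k, gradient]

lemma integral_latticeCutoff_mul {μ : Measure (EuclideanSpace ℝ (Fin n))}
    (hμ : ∀ k, MeasurePreserving (fun x => x + latticeVec k) μ μ) (hf : ZPeriodic f)
    (hi : Integrable (fun x => latticeCutoff x * f x) μ) :
    ∫ x, latticeCutoff x * f x ∂μ = ∫ x in Qcube n, f x ∂μ := by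
  rw [integral_eq_setIntegral_Qcube_sum hμ hi fun x hx =>
    latticeFloor_mem_cutoffTiles (subset_tsupport _ (left_ne_zero_of_mul hx))]
  refine setIntegral_congr_fun measurableSet_Qcube fun x hx => ?_
  simp only [hf.apply_add_latticeVec, ← Finset.sum_mul]
  rw [(sum_latticeCutoff_eventuallyEq_one hx).eq_of_nhds, Pi.one_apply, one_mul]

/-- The lattice translates of the cutoff sum to a constant, so those of its derivative cancel. -/
lemma integral_fderiv_latticeCutoff {μ : Measure (EuclideanSpace ℝ (Fin n))}
    (hμ : ∀ k, MeasurePreserving (fun x => x + latticeVec k) μ μ)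
    (hX : ∀ x k, X (x + latticeVec k) = X x)
    (hi : Integrable (fun x => fderiv ℝ latticeCutoff x (X x)) μ) :
    ∫ x, fderiv ℝ latticeCutoff x (X x) ∂μ = 0 := by
  have hsupp : ∀ x, fderiv ℝ latticeCutoff x (X x) ≠ 0 → x ∈ tsupport (latticeCutoff (n := n)) :=
    fun x hx => support_fderiv_subset ℝ fun h => hx (by rw [h, zero_apply])
  rw [integral_eq_setIntegral_Qcube_sum hμ hi fun x hx =>
    latticeFloor_mem_cutoffTiles (hsupp x hx)]
  refine setIntegral_eq_zero_of_forall_eq_zero fun x hx => ?_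
  simp only [hX, ← sum_apply, sum_fderiv_latticeCutoff_add hx, zero_apply]

lemma flux_latticeCutoff_smul_eq_zero (hφ : Continuous φ) (hper : ZPeriodic φ)
    (hX : ContDiff ℝ 1 X) (hXper : ∀ x k, X (x + latticeVec k) = X x)
    (hdiv : ∀ x, divergence X x = 0) : flux φ ((latticeCutoff (n := n)) • X) = 0 := by
  have hμ := measurePreserving_restrict_add_latticeVec (μ := volume)
    (fun k => measurePreserving_add_right volume (latticeVec k)) hper hφ.measurable
    (measurableSet_Ioi (a := (0 : ℝ)))
  have hint : Integrable fun x => fderiv ℝ latticeCutoff x (X x) :=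
    ((contDiff_latticeCutoff.continuous_fderiv one_ne_zero).clm_apply
      hX.continuous).integrable_of_hasCompactSupport
        ((hasCompactSupport_latticeCutoff.fderiv ℝ).mono fun x hx h => hx (by simp [h]))
  have hprod : ∀ x, divergence ((latticeCutoff (n := n)) • X) x =
      fderiv ℝ latticeCutoff x (X x) := fun x => by
    rw [divergence_smul (contDiff_latticeCutoff.differentiable one_ne_zero x)
      (hX.differentiable one_ne_zero x), hdiv, mul_zero, zero_add]
  simp only [flux, hprod, neg_eq_zero]
  exact integral_fderiv_latticeCutoff hμ hXper hint.integrableOn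

lemma flux_latticeCutoff_mul_smul_gradient_eq_zero (hφ : ContDiff ℝ 2 φ) (hψ : ContDiff ℝ 2 ψ)
    (hφper : ZPeriodic φ) (hψper : ZPeriodic ψ) (hlap : ∀ x, ψ x * lap φ x = φ x * lap ψ x) :
    flux φ ((fun x => latticeCutoff x * ψ x) • ∇ φ) = 0 := by
  refine (flux_mul_smul_gradient hφ hψ contDiff_latticeCutoff
    hasCompactSupport_latticeCutoff).trans ?_
  refine flux_latticeCutoff_smul_eq_zero hφ.continuous hφper
    (contDiff_smul_gradient_sub_smul_gradient hφ hψ) (fun x k => ?_) fun x => ?_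
  · simp only [Pi.sub_apply, Pi.smul_apply', hφper.apply_add_latticeVec,
      hψper.apply_add_latticeVec, hφper.gradient_add_latticeVec, hψper.gradient_add_latticeVec]
  · rw [divergence_smul_gradient_sub_smul_gradient hφ hψ, ← lap_eq_divergence_gradient hφ,
      ← lap_eq_divergence_gradient hψ, hlap, sub_self]

lemma integral_nodalMeasure_latticeCutoff_mul (hφ : ContDiff ℝ 2 φ) (hψ : Continuous ψ)
    (hφper : ZPeriodic φ) (hψper : ZPeriodic ψ) :
    ∫ x, latticeCutoff x * ψ x ∂nodalMeasure φ =
      ∫ x in {x ∈ Qcube n | φ x = 0}, ψ x * ‖∇ φ x‖ ∂μHE[n - 1] := by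
  have hφ1 : ContDiff ℝ 1 φ := hφ.of_le one_le_two
  have hint := (integrable_nodalMeasure_iff hφ1).1 <| integrable_nodalMeasure hφ
    (contDiff_latticeCutoff.continuous.mul hψ) hasCompactSupport_latticeCutoff.mul_right
  have hμ := measurePreserving_restrict_add_latticeVec (fun k => (IsometryEquiv.addRight
    (latticeVec k)).measurePreserving_euclideanHausdorffMeasure (n - 1)) hφper
    hφ.continuous.measurable (measurableSet_singleton (0 : ℝ))
  have hper : ZPeriodic fun x => ψ x * ‖∇ φ x‖ := fun x k =>
    congrArg₂ (· * ‖·‖) (hψper x k) (hφper.gradient_add_latticeVec x k)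
  rw [integral_nodalMeasure_eq_setIntegral hφ1]
  simp only [Pi.mul_apply, mul_assoc, finrank_euclideanSpace_fin] at hint ⊢
  exact (integral_latticeCutoff_mul hμ hper hint).trans
    (by rw [Measure.restrict_restrict measurableSet_Qcube]; rfl)

end Periodic

lemma setIntegral_euclideanHausdorffMeasure_eq_zero_iff {α : Type*} [EMetricSpace α]
    [MeasurableSpace α] [BorelSpace α] {d : ℕ} {s : Set α} {f : α → ℝ} :
    ∫ x in s, f x ∂μHE[d] = 0 ↔ ∫ x in s, f x ∂μH[d] = 0 := by
  rw [Measure.euclideanHausdorffMeasure_def, Measure.restrict_smul, integral_smul_nnreal_measure,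
    smul_eq_zero_iff_right (Measure.addHaarScalarFactor_volume_hausdorffMeasure_ne_zero d)]

theorem same_eigenvalue_orthogonality_general {n : ℕ} (hn : n ≠ 0)
    {φ ψ : EuclideanSpace ℝ (Fin n) → ℝ} (hφ : ContDiff ℝ 2 φ) (hψ : ContDiff ℝ 2 ψ)
    (hφper : ZPeriodic φ) (hψper : ZPeriodic ψ) (hlap : ∀ x, ψ x * lap φ x = φ x * lap ψ x) :
    ∫ x in {x ∈ Qcube n | φ x = 0}, ψ x * ‖gradient φ x‖ ∂μH[(n : ℝ) - 1] = 0 := by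
  have hflux := integral_nodalMeasure_eq_flux hφ
    (contDiff_latticeCutoff.mul (hψ.of_le one_le_two)) hasCompactSupport_latticeCutoff.mul_right
  rw [flux_latticeCutoff_mul_smul_gradient_eq_zero hφ hψ hφper hψper hlap] at hflux
  rw [← Nat.cast_pred (Nat.pos_of_ne_zero hn),
    ← setIntegral_euclideanHausdorffMeasure_eq_zero_iff,
    ← integral_nodalMeasure_latticeCutoff_mul hφ hψ.continuous hφper hψper]
  exact hflux

theorem same_eigenvalue_orthogonality (n : ℕ) (hn : 2 ≤ n)
    (φj φk : EuclideanSpace ℝ (Fin n) → ℝ)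
    (hφj : ContDiff ℝ (⊤ : ℕ∞) φj) (hperj : ZPeriodic φj)
    (hφk : ContDiff ℝ (⊤ : ℕ∞) φk) (hperk : ZPeriodic φk)
    (lam : ℝ) (hlam : 0 < lam)
    (heigj : ∀ x, lap φj x = -lam ^ 2 * φj x)
    (heigk : ∀ x, lap φk x = -lam ^ 2 * φk x) :
    ∫ x in {x ∈ Qcube n | φj x = 0}, φk x * ‖gradient φj x‖ ∂μH[(n : ℝ) - 1] = 0 :=
  same_eigenvalue_orthogonality_general (by omega) (contDiff_infty.1 hφj 2)
    (contDiff_infty.1 hφk 2) hperj hperk fun x => by rw [heigj, heigk]; ring
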